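/- arXiv:2203.01328 — 4 statements merged into one kernel-verified Lean document; each statement's English description precedes it below -/
import Mathlib

section
/- Let N > 2 be an integer, Ω ⊂ ℝ^N a nonempty bounded open set, Σ ⊂ Ω a nonempty compact set, and α ≤ N − 2 a real number. For x, y in the closure of Ω with x ≠ y set 𝒩_α(x,y) = max{|x−y|, d_Σ(x), d_Σ(y)}^α / ( |x−y|^{N−2} · max{|x−y|, d(x), d(y)}^2 ). Then there exists a constant C = C(N, Ω, Σ, α) > 0 such that for all pairwise distinct points x, y, z in the closure of Ω one has 1/𝒩_α(x,y) ≤ C ( 1/𝒩_α(x,z) + 1/𝒩_α(z,y) ); that is, the reciprocal of 𝒩_α satisfies a quasi-metric inequality. -/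
open MeasureTheory Metric Set

/-- The kernel `𝒩_α(x,y)` from the paper. -/
noncomputable def NKer (N : ℕ) (Ω S : Set (EuclideanSpace ℝ (Fin N))) (α : ℝ)
    (x y : EuclideanSpace ℝ (Fin N)) : ℝ :=
  (max (dist x y) (max (infDist x S) (infDist y S))) ^ α /
    ((dist x y) ^ ((N : ℝ) - 2) *
      (max (dist x y) (max (infDist x (frontier Ω)) (infDist y (frontier Ω)))) ^ (2 : ℝ))

/-!
By symmetry assume `dist z y ≤ dist x z`, so that `dist x y ≤ 2 * dist x z`, and compare
`1 / 𝒩_α(x, y)` with `1 / 𝒩_α(x, z)` alone. For a Lipschitz function `f`, such as the distance to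
`Σ` or to `∂Ω`, `F(x, y) := max {dist x y, f x, f y}` is Lipschitz in `y`, so passing from `z` to
`y` costs at most a constant times `dist x z ≤ F(x, z)`; this controls the factor `F ^ (-α)` when
`α ≤ 0`. When `0 < α ≤ n := N - 2`, write
`dist x y ^ n / F(x, y) ^ α = dist x y ^ (n - α) * (dist x y / F(x, y)) ^ α` and use that
`dist x y / F(x, y)` is at most a constant times `dist x z / F(x, z)`.
-/

open scoped NNReal

section Rpow

variable {c r s u v n α : ℝ}

lemma rpow_le_mul_rpow_of_le_mul (hr : 0 ≤ r) (hc : 0 ≤ c) (hs : 0 ≤ s) (hrs : r ≤ c * s)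
    (hα : 0 ≤ α) : r ^ α ≤ c ^ α * s ^ α :=
  (Real.rpow_le_rpow hr hrs hα).trans_eq (Real.mul_rpow hc hs)

lemma rpow_div_rpow_le_of_nonpos (hc : 0 < c) (hr : 0 ≤ r) (hs : 0 ≤ s) (hu : 0 ≤ u) (hv : 0 ≤ v)
    (hn : 0 ≤ n) (hα : α ≤ 0) (hrs : r ≤ c * s) (huv : u ≤ c * v) :
    r ^ n / u ^ α ≤ c ^ (n - α) * (s ^ n / v ^ α) := by
  have hr_pow : r ^ n ≤ c ^ n * s ^ n := rpow_le_mul_rpow_of_le_mul hr hc.le hs hrs hn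
  have hu_pow : u ^ (-α) ≤ c ^ (-α) * v ^ (-α) :=
    rpow_le_mul_rpow_of_le_mul hu hc.le hv huv (neg_nonneg.2 hα)
  calc r ^ n / u ^ α = r ^ n * u ^ (-α) := by rw [Real.rpow_neg hu, div_eq_mul_inv]
    _ ≤ (c ^ n * s ^ n) * (c ^ (-α) * v ^ (-α)) := by gcongr
    _ = (c ^ n * c ^ (-α)) * (s ^ n * v ^ (-α)) := by ring
    _ = c ^ (n - α) * (s ^ n / v ^ α) := by
      rw [← Real.rpow_add hc, ← sub_eq_add_neg, Real.rpow_neg hv, ← div_eq_mul_inv]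

lemma rpow_div_rpow_eq_rpow_sub_mul (hr : 0 < r) (hu : 0 ≤ u) (n α : ℝ) :
    r ^ n / u ^ α = r ^ (n - α) * (r / u) ^ α := by
  rw [Real.div_rpow hr.le hu, ← mul_div_assoc, ← Real.rpow_add hr, sub_add_cancel]

lemma rpow_div_rpow_le_of_nonneg (hc : 0 < c) (hr : 0 < r) (hs : 0 < s) (hu : 0 < u) (hv : 0 < v)
    (hα : 0 ≤ α) (hαn : α ≤ n) (hrs : r ≤ c * s) (hcross : r * v ≤ c * (s * u)) :
    r ^ n / u ^ α ≤ c ^ n * (s ^ n / v ^ α) := by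
  have hratio : r / u ≤ c * (s / v) := by
    rwa [← mul_div_assoc, div_le_div_iff₀ hu hv, mul_assoc]
  have hr_pow : r ^ (n - α) ≤ c ^ (n - α) * s ^ (n - α) :=
    rpow_le_mul_rpow_of_le_mul hr.le hc.le hs.le hrs (sub_nonneg.2 hαn)
  have hratio_pow : (r / u) ^ α ≤ c ^ α * (s / v) ^ α :=
    rpow_le_mul_rpow_of_le_mul (by positivity) hc.le (by positivity) hratio hα
  calc r ^ n / u ^ α = r ^ (n - α) * (r / u) ^ α := rpow_div_rpow_eq_rpow_sub_mul hr hu.le n α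
    _ ≤ (c ^ (n - α) * s ^ (n - α)) * (c ^ α * (s / v) ^ α) := by gcongr
    _ = (c ^ (n - α) * c ^ α) * (s ^ (n - α) * (s / v) ^ α) := by ring
    _ = c ^ n * (s ^ n / v ^ α) := by
      rw [← Real.rpow_add hc, sub_add_cancel, rpow_div_rpow_eq_rpow_sub_mul hs hv.le]

lemma rpow_div_rpow_le (hc : 1 ≤ c) (hr : 0 < r) (hs : 0 < s) (hu : 0 < u) (hv : 0 < v)
    (hn : 0 ≤ n) (hαn : α ≤ n) (hrs : r ≤ c * s) (huv : u ≤ c * v)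
    (hcross : r * v ≤ c * (s * u)) :
    r ^ n / u ^ α ≤ c ^ (n + |α|) * (s ^ n / v ^ α) := by
  have hc₀ : 0 < c := one_pos.trans_le hc
  rcases le_total α 0 with hα | hα
  · rw [abs_of_nonpos hα, ← sub_eq_add_neg]
    exact rpow_div_rpow_le_of_nonpos hc₀ hr.le hs.le hu.le hv.le hn hα hrs huv
  · calc r ^ n / u ^ α ≤ c ^ n * (s ^ n / v ^ α) :=
          rpow_div_rpow_le_of_nonneg hc₀ hr hs hu hv hα hαn hrs hcross
      _ ≤ c ^ (n + |α|) * (s ^ n / v ^ α) := by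
          gcongr
          exact le_add_of_nonneg_right (abs_nonneg α)

end Rpow

section PseudoMetricSpace

variable {X : Type*} [PseudoMetricSpace X]

/-- The quantity `max {dist x y, f x, f y}`, which for `f = infDist · S` is the distance between
`x` and `y` truncated from below by their distances to `S`. -/
def distMax (f : X → ℝ) (x y : X) : ℝ :=
  max (dist x y) (max (f x) (f y))

/-- The kernel `𝒩_α` with the two distance functions replaced by arbitrary functions `f` and `g`,
and the exponents `N - 2` and `2` of its denominator by `n` and `β`. -/
noncomputable def weightedKernel (n α β : ℝ) (f g : X → ℝ) (x y : X) : ℝ :=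
  distMax f x y ^ α / (dist x y ^ n * distMax g x y ^ β)

variable {f g : X → ℝ} {K L : ℝ≥0} {n α β : ℝ} {x y z : X}

lemma distMax_comm (f : X → ℝ) (x y : X) : distMax f x y = distMax f y x := by
  rw [distMax, distMax, dist_comm, max_comm (f x)]

lemma dist_le_distMax (f : X → ℝ) (x y : X) : dist x y ≤ distMax f x y :=
  le_max_left _ _

lemma distMax_nonneg (f : X → ℝ) (x y : X) : 0 ≤ distMax f x y :=
  dist_nonneg.trans (dist_le_distMax f x y)

lemma lipschitzWith_distMax (hf : LipschitzWith K f) (x : X) :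
    LipschitzWith (max 1 K) (distMax f x) := by
  have hmax : LipschitzWith K fun y => max (f x) (f y) := by
    simpa only [zero_le, max_eq_right] using (LipschitzWith.const (f x)).max hf
  exact (LipschitzWith.dist_right x).max hmax

lemma distMax_le_add_mul_dist (hf : LipschitzWith K f) (x y z : X) :
    distMax f x y ≤ distMax f x z + max 1 (K : ℝ) * dist y z := by
  simpa only [NNReal.coe_max, NNReal.coe_one] using (lipschitzWith_distMax hf x).le_add_mul y z

lemma dist_le_two_mul_dist (h : dist z y ≤ dist x z) : dist x y ≤ 2 * dist x z := by
  linarith [dist_triangle x z y]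

lemma distMax_le_mul_distMax (hf : LipschitzWith K f) (h : dist z y ≤ dist x z) :
    distMax f x y ≤ (1 + max 1 (K : ℝ)) * distMax f x z :=
  calc distMax f x y ≤ distMax f x z + max 1 (K : ℝ) * dist y z := distMax_le_add_mul_dist hf x y z
    _ ≤ distMax f x z + max 1 (K : ℝ) * distMax f x z := by
      gcongr
      exact (dist_comm y z).trans_le (h.trans (dist_le_distMax f x z))
    _ = (1 + max 1 (K : ℝ)) * distMax f x z := by ring

lemma dist_mul_distMax_le (hf : LipschitzWith K f) (h : dist z y ≤ dist x z) :
    dist x y * distMax f x z ≤ (2 + max 1 (K : ℝ)) * (dist x z * distMax f x y) := by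
  have hdist : dist x y * distMax f x y ≤ 2 * dist x z * distMax f x y :=
    mul_le_mul_of_nonneg_right (dist_le_two_mul_dist h) (distMax_nonneg f x y)
  calc dist x y * distMax f x z
      ≤ dist x y * (distMax f x y + max 1 (K : ℝ) * dist z y) := by
        gcongr
        exact distMax_le_add_mul_dist hf x z y
    _ = dist x y * distMax f x y + max 1 (K : ℝ) * (dist x y * dist z y) := by ring
    _ ≤ 2 * dist x z * distMax f x y + max 1 (K : ℝ) * (distMax f x y * dist x z) := by
        gcongr
        · exact distMax_nonneg f x y
        · exact dist_le_distMax f x y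
    _ = (2 + max 1 (K : ℝ)) * (dist x z * distMax f x y) := by ring

lemma weightedKernel_comm (n α β : ℝ) (f g : X → ℝ) (x y : X) :
    weightedKernel n α β f g x y = weightedKernel n α β f g y x := by
  rw [weightedKernel, weightedKernel, distMax_comm f, distMax_comm g, dist_comm]

lemma one_div_weightedKernel (n α β : ℝ) (f g : X → ℝ) (x y : X) :
    1 / weightedKernel n α β f g x y = dist x y ^ n / distMax f x y ^ α * distMax g x y ^ β := by
  rw [weightedKernel, one_div_div, mul_div_right_comm]

lemma one_div_weightedKernel_nonneg (n α β : ℝ) (f g : X → ℝ) (x y : X) :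
    0 ≤ 1 / weightedKernel n α β f g x y := by
  have hf := distMax_nonneg f x y
  have hg := distMax_nonneg g x y
  rw [one_div_weightedKernel]
  positivity

lemma dist_rpow_div_distMax_rpow_le (hf : LipschitzWith K f) (hn : 0 ≤ n) (hα : α ≤ n)
    (hxy : 0 < dist x y) (h : dist z y ≤ dist x z) :
    dist x y ^ n / distMax f x y ^ α ≤
      (2 + max 1 (K : ℝ)) ^ (n + |α|) * (dist x z ^ n / distMax f x z ^ α) := by
  have hM : 1 ≤ max 1 (K : ℝ) := le_max_left _ _
  have hxz : 0 < dist x z := by linarith [dist_le_two_mul_dist h]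
  refine rpow_div_rpow_le (by linarith) hxy hxz (hxy.trans_le (dist_le_distMax f x y))
    (hxz.trans_le (dist_le_distMax f x z)) hn hα ?_ ?_ (dist_mul_distMax_le hf h)
  · exact (dist_le_two_mul_dist h).trans (by gcongr; linarith)
  · refine (distMax_le_mul_distMax hf h).trans ?_
    gcongr
    · exact distMax_nonneg f x z
    · exact one_le_two

lemma one_div_weightedKernel_le (hf : LipschitzWith K f) (hg : LipschitzWith L g) (hn : 0 ≤ n)
    (hα : α ≤ n) (hβ : 0 ≤ β) (hxy : 0 < dist x y) (h : dist z y ≤ dist x z) :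
    1 / weightedKernel n α β f g x y ≤
      (2 + max 1 (K : ℝ)) ^ (n + |α|) * (1 + max 1 (L : ℝ)) ^ β *
        (1 / weightedKernel n α β f g x z) := by
  have hg_pow : distMax g x y ^ β ≤ (1 + max 1 (L : ℝ)) ^ β * distMax g x z ^ β :=
    rpow_le_mul_rpow_of_le_mul (distMax_nonneg g x y) (by positivity) (distMax_nonneg g x z)
      (distMax_le_mul_distMax hg h) hβ
  have hf_nonneg := distMax_nonneg f x z
  have hg_nonneg := distMax_nonneg g x y
  rw [one_div_weightedKernel, one_div_weightedKernel, mul_mul_mul_comm]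
  exact mul_le_mul (dist_rpow_div_distMax_rpow_le hf hn hα hxy h) hg_pow (by positivity)
    (by positivity)

theorem quasi_metric_NKer_general (hf : LipschitzWith K f) (hg : LipschitzWith L g) (hn : 0 ≤ n)
    (hα : α ≤ n) (hβ : 0 ≤ β) :
    ∃ C : ℝ, 0 < C ∧ ∀ x y z : X, 0 < dist x y → 0 < dist x z → 0 < dist y z →
      1 / weightedKernel n α β f g x y ≤
        C * (1 / weightedKernel n α β f g x z + 1 / weightedKernel n α β f g z y) := by
  refine ⟨(2 + max 1 (K : ℝ)) ^ (n + |α|) * (1 + max 1 (L : ℝ)) ^ β, by positivity,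
    fun x y z hxy _ _ => ?_⟩
  rcases le_total (dist z y) (dist x z) with h | h
  · refine (one_div_weightedKernel_le hf hg hn hα hβ hxy h).trans ?_
    gcongr
    exact le_add_of_nonneg_right (one_div_weightedKernel_nonneg ..)
  · rw [dist_comm x z, dist_comm z y] at h
    rw [dist_comm x y] at hxy
    rw [weightedKernel_comm _ _ _ _ _ x y, weightedKernel_comm _ _ _ _ _ z y]
    refine (one_div_weightedKernel_le hf hg hn hα hβ hxy h).trans ?_
    gcongr
    exact le_add_of_nonneg_left (one_div_weightedKernel_nonneg ..)

end PseudoMetricSpace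

lemma NKer_eq_weightedKernel (N : ℕ) (Ω S : Set (EuclideanSpace ℝ (Fin N))) (α : ℝ)
    (x y : EuclideanSpace ℝ (Fin N)) :
    NKer N Ω S α x y =
      weightedKernel ((N : ℝ) - 2) α 2 (infDist · S) (infDist · (frontier Ω)) x y :=
  rfl

/-- The reciprocal of `𝒩_α` satisfies a quasi-metric inequality. -/
theorem quasi_metric_NKer (N : ℕ) (hN : 2 < N) (Ω S : Set (EuclideanSpace ℝ (Fin N)))
    (hΩo : IsOpen Ω) (hΩb : Bornology.IsBounded Ω) (hΩne : Ω.Nonempty)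
    (hS : IsCompact S) (hSne : S.Nonempty) (hSΩ : S ⊆ Ω)
    (α : ℝ) (hα : α ≤ (N : ℝ) - 2) :
    ∃ C : ℝ, 0 < C ∧ ∀ x ∈ closure Ω, ∀ y ∈ closure Ω, ∀ z ∈ closure Ω,
      x ≠ y → x ≠ z → y ≠ z →
      1 / NKer N Ω S α x y ≤ C * (1 / NKer N Ω S α x z + 1 / NKer N Ω S α z y) := by
  obtain ⟨C, hC, hquasi⟩ := quasi_metric_NKer_general (lipschitz_infDist_pt S)
    (lipschitz_infDist_pt (frontier Ω)) (sub_nonneg.2 (by exact_mod_cast hN.le)) hα zero_le_two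
  simp only [NKer_eq_weightedKernel]
  exact ⟨C, hC, fun x _ y _ z _ hxy hxz hyz =>
    hquasi x y z (dist_pos.2 hxy) (dist_pos.2 hxz) (dist_pos.2 hyz)⟩
end

section
/- Let N > 2 be an integer, Ω ⊂ ℝ^N a nonempty bounded open set with 0 ∈ Ω, let 0 < α ≤ (N−2)/2 and 0 ≤ γ ≤ 1. Set p = min{ (N−α)/(N−2−α), (N+γ)/(N−2+γ−2α) }, where the second quantity is interpreted as +∞ if N−2+γ−2α = 0. Then there exists C = C(N, Ω, α, γ) > 0 such that for every finite positive Borel measure ω on Ω ∖ {0} and every λ > 0: ∫_{{x ∈ Ω∖{0} : U(x) > λ}} d(x)|x|^{−α} dx ≤ C λ^{−p} ω(Ω∖{0})^p, where U(x) = ∫_{Ω∖{0}} |x|^{−α} |x−y|^{−N+2+2α} d(y)^{−γ} · min{1, d(x)d(y)/|x−y|^2} dω(y). -/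
open MeasureTheory Metric Set

/-- The exponent `p = min{(N−α)/(N−2−α), (N+γ)/(N−2+γ−2α)}`, where the second
quantity is interpreted as `+∞` (i.e. dropped from the minimum) if `N−2+γ−2α = 0`. -/
noncomputable def pExp (N : ℕ) (α γ : ℝ) : ℝ :=
  if (N : ℝ) - 2 + γ - 2 * α = 0 then ((N : ℝ) - α) / ((N : ℝ) - 2 - α)
  else min (((N : ℝ) - α) / ((N : ℝ) - 2 - α)) (((N : ℝ) + γ) / ((N : ℝ) - 2 + γ - 2 * α))

/-!
Write `ν` for the measure `d(x)|x|^{-α} dx` and `k(x, y)` for the kernel of `U`. By Tonelli and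
Chebyshev it is enough to find `A` with `∫_s k(x, y) dν(x) ≤ A ν(s)^{1 - 1/p}` for all sets `s` and
all `y ∈ Ω`: this condition is linear in the kernel, so it passes to the superposition `U`.

Since `d(x) ≤ d(y) + |x - y|`, one has
`d(y)^{-γ} min{1, d(x)d(y)/|x-y|²} ≤ 4 max{d(x), |x-y|}^{-γ}`. Near the origin `d` is bounded below,
and `k` is at most a multiple of `ρ^{-(N-2-α)}` with `ρ = min{|x|, |x-y|}`; away from the origin it
is at most a multiple of `|x-y|^{-(N-2+γ-2α)}`. In both regions `∫ k dν` over the sublevel set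
`{ρ < R}` of the gauge (`ρ = |x-y|` in the second) is a Riesz integral, of order `R²` and
`R^{2+2α}`. Splitting `s` at a suitable level of the gauge gives the exponents
`(N-α)/(N-2-α)` and `(N+γ)/(N-2+γ-2α)`, and `p` is the smaller of the two.
-/

open Module
open scoped ENNReal

section MarcinkiewiczBound

variable {X Y : Type*} [MeasurableSpace X] [MeasurableSpace Y] {μ : Measure X} {ω : Measure Y}
  {f : X → ℝ≥0∞} {θ θ' : ℝ} {A B : ℝ≥0∞}

/-- `f` belongs to the Marcinkiewicz (weak Lebesgue) space of exponent `1 / θ` over `μ`, with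
constant `A`. The condition is tested on sets, so that it passes to superpositions of functions,
and it is written with the reciprocal exponent so that `θ = 0` stands for the exponent `∞`. -/
def HasMarcinkiewiczBound (μ : Measure X) (f : X → ℝ≥0∞) (θ : ℝ) (A : ℝ≥0∞) : Prop :=
  ∀ ⦃s : Set X⦄, MeasurableSet s → ∫⁻ x in s, f x ∂μ ≤ A * μ s ^ (1 - θ)

namespace HasMarcinkiewiczBound

theorem mono_exponent (h : HasMarcinkiewiczBound μ f θ A) (hθ : θ ≤ θ') (hθ' : θ' ≤ 1) :
    HasMarcinkiewiczBound μ f θ' (A * μ univ ^ (θ' - θ)) := fun s hs ↦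
  calc ∫⁻ x in s, f x ∂μ ≤ A * μ s ^ (1 - θ) := h hs
    _ = A * (μ s ^ (θ' - θ) * μ s ^ (1 - θ')) := by
      rw [← ENNReal.rpow_add_of_nonneg _ _ (sub_nonneg.2 hθ) (sub_nonneg.2 hθ')]; ring_nf
    _ ≤ A * (μ univ ^ (θ' - θ) * μ s ^ (1 - θ')) := by
      gcongr
      exact subset_univ s
    _ = A * μ univ ^ (θ' - θ) * μ s ^ (1 - θ') := (mul_assoc ..).symm

theorem of_restrict_compl {t : Set X} (ht : MeasurableSet t) (hθ : θ ≤ 1)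
    (hA : HasMarcinkiewiczBound (μ.restrict t) f θ A)
    (hB : HasMarcinkiewiczBound (μ.restrict tᶜ) f θ B) :
    HasMarcinkiewiczBound μ f θ (A + B) := fun s hs ↦
  calc ∫⁻ x in s, f x ∂μ
      = ∫⁻ x in s, f x ∂(μ.restrict t) + ∫⁻ x in s, f x ∂(μ.restrict tᶜ) := by
        rw [← lintegral_add_measure, ← Measure.restrict_add, Measure.restrict_add_restrict_compl ht]
    _ ≤ A * μ.restrict t s ^ (1 - θ) + B * μ.restrict tᶜ s ^ (1 - θ) := add_le_add (hA hs) (hB hs)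
    _ ≤ A * μ s ^ (1 - θ) + B * μ s ^ (1 - θ) := by
      gcongr <;> exact Measure.restrict_le_self
    _ = (A + B) * μ s ^ (1 - θ) := (add_mul ..).symm

theorem lintegral_kernel [SFinite μ] [SFinite ω] {k : X → Y → ℝ≥0∞}
    (hk : Measurable (Function.uncurry k))
    (h : ∀ᵐ y ∂ω, HasMarcinkiewiczBound μ (fun x ↦ k x y) θ A) :
    HasMarcinkiewiczBound μ (fun x ↦ ∫⁻ y, k x y ∂ω) θ (A * ω univ) := fun s hs ↦
  calc ∫⁻ x in s, ∫⁻ y, k x y ∂ω ∂μ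
      = ∫⁻ y, ∫⁻ x in s, k x y ∂μ ∂ω := lintegral_lintegral_swap hk.aemeasurable
    _ ≤ ∫⁻ _, A * μ s ^ (1 - θ) ∂ω := lintegral_mono_ae (h.mono fun _ hy ↦ hy hs)
    _ = A * ω univ * μ s ^ (1 - θ) := by rw [lintegral_const]; ring

theorem measure_lt_le [IsFiniteMeasure μ] (h : HasMarcinkiewiczBound μ f θ A) (hf : Measurable f)
    (hθ : 0 < θ) {t : ℝ≥0∞} (ht₀ : t ≠ 0) (ht : t ≠ ∞) :
    μ {x | t < f x} ≤ (A / t) ^ (1 / θ) := by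
  have hs : MeasurableSet {x | t < f x} := measurableSet_lt measurable_const hf
  set m := μ {x | t < f x}
  rcases eq_or_ne m 0 with hm₀ | hm₀
  · simp [hm₀]
  have hm : m ≠ ∞ := measure_ne_top _ _
  have chebyshev : t * m ≤ A * m ^ (1 - θ) :=
    calc t * m = ∫⁻ _ in {x | t < f x}, t ∂μ := (setLIntegral_const _ _).symm
      _ ≤ ∫⁻ x in {x | t < f x}, f x ∂μ := setLIntegral_mono' hs fun _ hx ↦ le_of_lt hx
      _ ≤ A * m ^ (1 - θ) := h hs
  have rpow_le : m ^ θ ≤ A / t := by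
    rw [ENNReal.le_div_iff_mul_le (.inl ht₀) (.inl ht)]
    refine (ENNReal.mul_le_mul_iff_left (c := m ^ (1 - θ)) (by simp [hm₀, hm])
      (by simp [hm₀, hm])).1 ?_
    calc m ^ θ * t * m ^ (1 - θ) = t * (m ^ θ * m ^ (1 - θ)) := by ring
      _ = t * m := by rw [← ENNReal.rpow_add _ _ hm₀ hm, add_sub_cancel, ENNReal.rpow_one]
      _ ≤ A * m ^ (1 - θ) := chebyshev
  calc m = (m ^ θ) ^ (1 / θ) := by
        rw [← ENNReal.rpow_mul, mul_one_div_cancel hθ.ne', ENNReal.rpow_one]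
    _ ≤ (A / t) ^ (1 / θ) := ENNReal.rpow_le_rpow rpow_le (by positivity)

/- Split a set of measure `m` at the level `ρ = m ^ (1 / d)`, where both bounds balance. -/
theorem of_gauge [IsFiniteMeasure μ] {ρ : X → ℝ} (hρ : Measurable ρ) {d σ : ℝ} (hd : 0 < d)
    (hσ : 0 ≤ σ) (hA : ∀ᵐ x ∂μ, 0 < ρ x → f x ≤ A * .ofReal (ρ x ^ (-σ)))
    (hB : ∀ R, 0 < R → ∫⁻ x in {x | ρ x < R}, f x ∂μ ≤ B * .ofReal (R ^ (d - σ))) :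
    HasMarcinkiewiczBound μ f (σ / d) (A + B) := by
  intro s hs
  rcases eq_or_ne (μ s) 0 with hm₀ | hm₀
  · rw [setLIntegral_measure_zero _ _ hm₀]; exact zero_le
  have hm : μ s ≠ ∞ := measure_ne_top _ _
  have hm_pos : 0 < (μ s).toReal := ENNReal.toReal_pos hm₀ hm
  set R := (μ s).toReal ^ (1 / d) with hR
  have hR_pos : 0 < R := by positivity
  have ofReal_R_rpow (a : ℝ) : ENNReal.ofReal (R ^ a) = μ s ^ (a / d) := by
    rw [hR, ← Real.rpow_mul hm_pos.le, ← ENNReal.ofReal_rpow_of_pos hm_pos,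
      ENNReal.ofReal_toReal hm, one_div_mul_eq_div]
  have ht : MeasurableSet {x | ρ x < R} := measurableSet_lt hρ measurable_const
  have inner : ∫⁻ x in s ∩ {x | ρ x < R}, f x ∂μ ≤ B * μ s ^ (1 - σ / d) :=
    calc ∫⁻ x in s ∩ {x | ρ x < R}, f x ∂μ ≤ ∫⁻ x in {x | ρ x < R}, f x ∂μ :=
          lintegral_mono_set inter_subset_right
      _ ≤ B * .ofReal (R ^ (d - σ)) := hB R hR_pos
      _ = B * μ s ^ (1 - σ / d) := by rw [ofReal_R_rpow, sub_div, div_self hd.ne']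
  have outer : ∫⁻ x in s \ {x | ρ x < R}, f x ∂μ ≤ A * μ s ^ (1 - σ / d) :=
    calc ∫⁻ x in s \ {x | ρ x < R}, f x ∂μ
        ≤ ∫⁻ _ in s \ {x | ρ x < R}, A * .ofReal (R ^ (-σ)) ∂μ := by
          refine setLIntegral_mono_ae' (hs.diff ht) (hA.mono fun x hx hxs ↦ ?_)
          have hRx : R ≤ ρ x := not_lt.1 hxs.2
          exact (hx (hR_pos.trans_le hRx)).trans (by
            gcongr A * ENNReal.ofReal ?_
            exact Real.rpow_le_rpow_of_nonpos hR_pos hRx (by linarith))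
      _ ≤ A * .ofReal (R ^ (-σ)) * μ s := by
          rw [setLIntegral_const]; gcongr; exact sdiff_subset
      _ = A * (μ s ^ (-σ / d) * μ s ^ (1 : ℝ)) := by rw [ofReal_R_rpow, ENNReal.rpow_one, mul_assoc]
      _ = A * μ s ^ (1 - σ / d) := by rw [← ENNReal.rpow_add _ _ hm₀ hm]; ring_nf
  calc ∫⁻ x in s, f x ∂μ
      = ∫⁻ x in s ∩ {x | ρ x < R}, f x ∂μ + ∫⁻ x in s \ {x | ρ x < R}, f x ∂μ :=
        (lintegral_inter_add_sdiff f s ht).symm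
    _ ≤ B * μ s ^ (1 - σ / d) + A * μ s ^ (1 - σ / d) := add_le_add inner outer
    _ = (A + B) * μ s ^ (1 - σ / d) := by ring

end HasMarcinkiewiczBound

end MarcinkiewiczBound

section Elementary

variable {a b c m r s γ : ℝ}

theorem min_one_mul_div_sq_le (ha : 0 < a) (hb : 0 < b) (hab : a ≤ b + r) :
    min 1 (a * b / r ^ 2) ≤ 4 * (b / max a r) := by
  have hs : 0 < max a r := lt_max_of_lt_left ha
  rw [← mul_div_assoc, le_div_iff₀ hs]
  rcases le_or_gt (max a r) (4 * b) with h | h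
  · calc min 1 (a * b / r ^ 2) * max a r ≤ 1 * max a r := by gcongr; exact min_le_left _ _
      _ ≤ 4 * b := by rwa [one_mul]
  · have hsr : max a r ≤ 2 * r := by linarith [max_le hab (show r ≤ b + r by linarith)]
    have hr_pos : 0 < r := by linarith
    calc min 1 (a * b / r ^ 2) * max a r ≤ a * b / r ^ 2 * max a r := by
          gcongr; exact min_le_right _ _
      _ ≤ (2 * r) * b / r ^ 2 * (2 * r) := by gcongr; exact (le_max_left a r).trans hsr
      _ = 4 * b := by field_simp; ring

theorem rpow_neg_mul_le (hm₀ : 0 ≤ m) (hm₁ : m ≤ 1) (hb : 0 < b) (hs : 0 < s) (hc : 1 ≤ c)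
    (hγ₀ : 0 ≤ γ) (hγ₁ : γ ≤ 1) (h : m ≤ c * (b / s)) : b ^ (-γ) * m ≤ c * s ^ (-γ) :=
  calc b ^ (-γ) * m ≤ b ^ (-γ) * m ^ γ := by gcongr; exact Real.self_le_rpow_of_le_one hm₀ hm₁ hγ₁
    _ ≤ b ^ (-γ) * (c * (b / s)) ^ γ := by gcongr
    _ = c ^ γ * s ^ (-γ) := by
      rw [Real.mul_rpow (by positivity) (by positivity), Real.div_rpow hb.le hs.le,
        Real.rpow_neg hb.le, Real.rpow_neg hs.le]
      field_simp
    _ ≤ c * s ^ (-γ) := by gcongr; exact Real.rpow_le_self_of_one_le hc hγ₁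

theorem rpow_neg_mul_min_one_le (ha : 0 < a) (hb : 0 < b) (hab : a ≤ b + r)
    (hγ₀ : 0 ≤ γ) (hγ₁ : γ ≤ 1) :
    b ^ (-γ) * min 1 (a * b / r ^ 2) ≤ 4 * max a r ^ (-γ) :=
  rpow_neg_mul_le (by positivity) (min_le_left _ _) hb (lt_max_of_lt_left ha) (by norm_num)
    hγ₀ hγ₁ (min_one_mul_div_sq_le ha hb hab)

end Elementary

section RieszIntegral

variable {E : Type*} [NormedAddCommGroup E] [NormedSpace ℝ E] [FiniteDimensional ℝ E]
  [MeasurableSpace E] [BorelSpace E] (μ : Measure E) [μ.IsAddHaarMeasure]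

/-- The mass of the singular weight `‖x‖ ^ (-s)` on the unit ball: the constant in the scaling law
for the Riesz kernel on balls. -/
noncomputable def unitBallMass (s : ℝ) : ℝ≥0∞ := ∫⁻ x in ball 0 1, .ofReal (‖x‖ ^ (-s)) ∂μ

theorem unitBallMass_ne_top [Nontrivial E] {s : ℝ} (hs : s < finrank ℝ E) :
    unitBallMass μ s ≠ ∞ := by
  have integrable : IntegrableOn (fun x : E ↦ ‖x‖ ^ (-s)) (ball 0 1) μ :=
    integrableOn_ball_of_norm_le_rpow (C := 1) finrank_pos hs
      (.of_forall fun x ↦ by rw [Real.norm_of_nonneg (by positivity), one_mul])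
      (measurable_norm.pow_const _).aestronglyMeasurable
  exact integrable.lintegral_lt_top.ne

theorem setLIntegral_ball_dist_rpow (s : ℝ) (y : E) {R : ℝ} (hR : 0 < R) :
    ∫⁻ x in ball y R, .ofReal (dist x y ^ (-s)) ∂μ =
      .ofReal (R ^ (finrank ℝ E - s)) * unitBallMass μ s := by
  set g : E → ℝ≥0∞ := fun x ↦ .ofReal (‖x‖ ^ (-s)) with hg_def
  have hg : Measurable g := by fun_prop
  have translate : ∫⁻ x in ball y R, .ofReal (dist x y ^ (-s)) ∂μ = ∫⁻ x in ball 0 R, g x ∂μ := by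
    rw [← (measurePreserving_sub_right μ y).setLIntegral_comp_preimage measurableSet_ball hg]
    simp only [hg_def, dist_eq_norm]
    congr 2
    ext x; simp [dist_eq_norm]
  have g_smul (x : E) : g (R • x) = .ofReal (R ^ (-s)) * g x := by
    simp only [hg_def, norm_smul, Real.norm_of_nonneg hR.le]
    rw [Real.mul_rpow hR.le (norm_nonneg x), ENNReal.ofReal_mul (by positivity)]
  have preimage_ball : (R • ·) ⁻¹' ball (0 : E) R = ball 0 1 := by
    ext x; simp [norm_smul, abs_of_pos hR, hR]
  have dilate : .ofReal (R ^ (-s)) * unitBallMass μ s =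
      .ofReal (R ^ finrank ℝ E)⁻¹ * ∫⁻ x in ball 0 R, g x ∂μ :=
    calc .ofReal (R ^ (-s)) * unitBallMass μ s = ∫⁻ x in ball 0 1, g (R • x) ∂μ := by
          simp only [g_smul]; rw [lintegral_const_mul _ hg, unitBallMass]
      _ = ∫⁻ x in ball 0 R, g x ∂(μ.map (R • ·)) := by
          rw [setLIntegral_map measurableSet_ball hg (measurable_const_smul R), preimage_ball]
      _ = .ofReal (R ^ finrank ℝ E)⁻¹ * ∫⁻ x in ball 0 R, g x ∂μ := by
          rw [Measure.map_addHaar_smul μ hR.ne', Measure.restrict_smul, lintegral_smul_measure,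
            abs_of_pos (by positivity), smul_eq_mul]
  calc ∫⁻ x in ball y R, .ofReal (dist x y ^ (-s)) ∂μ = ∫⁻ x in ball 0 R, g x ∂μ := translate
    _ = .ofReal (R ^ finrank ℝ E) * (.ofReal (R ^ finrank ℝ E)⁻¹ * ∫⁻ x in ball 0 R, g x ∂μ) := by
      rw [← mul_assoc, ← ENNReal.ofReal_mul (by positivity), mul_inv_cancel₀ (by positivity),
        ENNReal.ofReal_one, one_mul]
    _ = .ofReal (R ^ (finrank ℝ E - s)) * unitBallMass μ s := by
      rw [← dilate, ← mul_assoc, ← ENNReal.ofReal_mul (by positivity), sub_eq_add_neg,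
        Real.rpow_add hR, Real.rpow_natCast]

theorem setLIntegral_min_dist_rpow_le (s : ℝ) (y z : E) {R : ℝ} (hR : 0 < R) :
    ∫⁻ x in {x | min (dist x y) (dist x z) < R}, .ofReal (min (dist x y) (dist x z) ^ (-s)) ∂μ ≤
      2 * (.ofReal (R ^ (finrank ℝ E - s)) * unitBallMass μ s) := by
  have piece (u v : E) :
      ∫⁻ x in {x | dist x u ≤ dist x v} ∩ ball u R,
        .ofReal (min (dist x u) (dist x v) ^ (-s)) ∂μ ≤
      .ofReal (R ^ (finrank ℝ E - s)) * unitBallMass μ s := by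
    have hm : MeasurableSet ({x | dist x u ≤ dist x v} ∩ ball u R) :=
      (measurableSet_le (by fun_prop) (by fun_prop)).inter measurableSet_ball
    rw [← setLIntegral_ball_dist_rpow μ s u hR,
      setLIntegral_congr_fun hm fun x hx ↦ by rw [min_eq_left hx.1]]
    exact lintegral_mono_set inter_subset_right
  have cover : {x | min (dist x y) (dist x z) < R} ⊆
      ({x | dist x y ≤ dist x z} ∩ ball y R) ∪ ({x | dist x z ≤ dist x y} ∩ ball z R) := by
    intro x hx
    rcases le_total (dist x y) (dist x z) with h | h
    · exact .inl ⟨h, (min_eq_left h).symm.trans_lt hx⟩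
    · exact .inr ⟨h, (min_eq_right h).symm.trans_lt hx⟩
  refine (lintegral_mono_set cover).trans ((lintegral_union_le _ _ _).trans ?_)
  rw [two_mul]
  exact add_le_add (piece y z) (by simpa only [min_comm] using piece z y)

end RieszIntegral

section BoundedDomain

variable {E : Type*} [NormedAddCommGroup E] {Ω : Set E}

theorem infDist_frontier_pos [NormedSpace ℝ E] [Nontrivial E] (hΩo : IsOpen Ω)
    (hΩb : Bornology.IsBounded Ω) {x : E} (hx : x ∈ Ω) : 0 < infDist x (frontier Ω) := by
  have hne : (frontier Ω).Nonempty := by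
    refine nonempty_iff_ne_empty.2 fun h ↦ ?_
    rcases frontier_eq_empty_iff.1 h with rfl | rfl
    · exact hx
    · exact NormedSpace.unbounded_univ ℝ E hΩb
  refine (isClosed_frontier.notMem_iff_infDist_pos hne).1 fun h ↦ ?_
  rw [hΩo.frontier_eq] at h
  exact h.2 hx

theorem infDist_frontier_le_diam (hΩb : Bornology.IsBounded Ω) {x : E} (hx : x ∈ Ω) :
    infDist x (frontier Ω) ≤ diam Ω := by
  rcases (frontier Ω).eq_empty_or_nonempty with h | ⟨z, hz⟩
  · simpa only [h, infDist_empty] using diam_nonneg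
  · calc infDist x (frontier Ω) ≤ dist x z := infDist_le_dist_of_mem hz
      _ ≤ diam (closure Ω) :=
        dist_le_diam_of_mem hΩb.closure (subset_closure hx) (frontier_subset_closure hz)
      _ = diam Ω := diam_closure Ω

theorem exists_forall_mem_ball_le_infDist_frontier [NormedSpace ℝ E] [Nontrivial E]
    (hΩo : IsOpen Ω) (hΩb : Bornology.IsBounded Ω) {z : E} (hz : z ∈ Ω) :
    ∃ δ, 0 < δ ∧ ∀ x ∈ ball z δ, δ ≤ infDist x (frontier Ω) := by
  refine ⟨infDist z (frontier Ω) / 2, half_pos (infDist_frontier_pos hΩo hΩb hz), fun x hx ↦ ?_⟩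
  have : infDist z (frontier Ω) ≤ infDist x (frontier Ω) + dist x z :=
    dist_comm z x ▸ infDist_le_infDist_add_dist
  linarith [mem_ball.1 hx]

end BoundedDomain

section HardyKernel

variable {E : Type*} [NormedAddCommGroup E] {Ω : Set E} {α γ δ : ℝ} {x y : E}

/-- The weight `d(x)|x|^{-α}`, where `d` is the distance to the boundary. -/
noncomputable def hardyWeight (Ω : Set E) (α : ℝ) (x : E) : ℝ :=
  infDist x (frontier Ω) * ‖x‖ ^ (-α)

theorem hardyWeight_nonneg : 0 ≤ hardyWeight Ω α x :=
  mul_nonneg infDist_nonneg (by positivity)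

variable [NormedSpace ℝ E]

/-- The kernel `|x|^{-α} |x-y|^{-N+2+2α} d(y)^{-γ} min{1, d(x)d(y)/|x-y|²}` of the potential `U`,
where `N` is the dimension of the space. It vanishes on the diagonal, because division by zero
gives zero. -/
noncomputable def hardyKernel (Ω : Set E) (α γ : ℝ) (x y : E) : ℝ :=
  ‖x‖ ^ (-α) * dist x y ^ (-(finrank ℝ E : ℝ) + 2 + 2 * α) * infDist y (frontier Ω) ^ (-γ) *
    min 1 (infDist x (frontier Ω) * infDist y (frontier Ω) / dist x y ^ 2)

theorem hardyKernel_self : hardyKernel Ω α γ x x = 0 := by simp [hardyKernel]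

theorem hardyKernel_le (hγ₀ : 0 ≤ γ) (hγ₁ : γ ≤ 1) (hx : 0 < infDist x (frontier Ω))
    (hy : 0 < infDist y (frontier Ω)) :
    hardyKernel Ω α γ x y ≤ ‖x‖ ^ (-α) * dist x y ^ (-(finrank ℝ E : ℝ) + 2 + 2 * α) *
      (4 * max (infDist x (frontier Ω)) (dist x y) ^ (-γ)) := by
  rw [hardyKernel, mul_assoc]
  gcongr _ * ?_
  exact rpow_neg_mul_min_one_le hx hy infDist_le_infDist_add_dist hγ₀ hγ₁

theorem hardyKernel_le_of_le_infDist (hα₀ : 0 ≤ α) (hα : α ≤ ((finrank ℝ E : ℝ) - 2) / 2)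
    (hγ₀ : 0 ≤ γ) (hγ₁ : γ ≤ 1) (hδ : 0 < δ) (hx₀ : x ≠ 0) (hx : δ ≤ infDist x (frontier Ω))
    (hy : 0 < infDist y (frontier Ω)) :
    hardyKernel Ω α γ x y ≤
      4 * δ ^ (-γ) * min (dist x 0) (dist x y) ^ (-((finrank ℝ E : ℝ) - 2 - α)) := by
  rcases eq_or_ne x y with rfl | hxy
  · rw [hardyKernel_self]; positivity
  rw [dist_zero_right]
  have hρ : 0 < min ‖x‖ (dist x y) := lt_min (norm_pos_iff.2 hx₀) (dist_pos.2 hxy)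
  calc hardyKernel Ω α γ x y
      ≤ ‖x‖ ^ (-α) * dist x y ^ (-(finrank ℝ E : ℝ) + 2 + 2 * α) *
          (4 * max (infDist x (frontier Ω)) (dist x y) ^ (-γ)) :=
        hardyKernel_le hγ₀ hγ₁ (hδ.trans_le hx) hy
    _ ≤ min ‖x‖ (dist x y) ^ (-α) *
          min ‖x‖ (dist x y) ^ (-(finrank ℝ E : ℝ) + 2 + 2 * α) * (4 * δ ^ (-γ)) := by
      gcongr ?_ * ?_ * (4 * ?_)
      · exact Real.rpow_le_rpow_of_nonpos hρ (min_le_left _ _) (by linarith)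
      · exact Real.rpow_le_rpow_of_nonpos hρ (min_le_right _ _) (by linarith)
      · exact Real.rpow_le_rpow_of_nonpos hδ (le_max_of_le_left hx) (by linarith)
    _ = 4 * δ ^ (-γ) * min ‖x‖ (dist x y) ^ (-((finrank ℝ E : ℝ) - 2 - α)) := by
      rw [← Real.rpow_add hρ, mul_comm]; ring_nf

theorem hardyWeight_mul_hardyKernel_le_of_le_infDist {D : ℝ} (hα₀ : 0 ≤ α)
    (hα : α ≤ ((finrank ℝ E : ℝ) - 2) / 2) (hγ₀ : 0 ≤ γ) (hγ₁ : γ ≤ 1) (hδ : 0 < δ)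
    (hx₀ : x ≠ 0) (hx : δ ≤ infDist x (frontier Ω)) (hxD : infDist x (frontier Ω) ≤ D)
    (hy : 0 < infDist y (frontier Ω)) :
    hardyWeight Ω α x * hardyKernel Ω α γ x y ≤
      D * (4 * δ ^ (-γ)) * min (dist x 0) (dist x y) ^ (-((finrank ℝ E : ℝ) - 2)) := by
  have hD : 0 < D := hδ.trans_le (hx.trans hxD)
  rcases eq_or_ne x y with rfl | hxy
  · rw [hardyKernel_self, mul_zero]; positivity
  have hρ : 0 < min (dist x 0) (dist x y) := lt_min (dist_pos.2 hx₀) (dist_pos.2 hxy)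
  have weight_le : hardyWeight Ω α x ≤ D * min (dist x 0) (dist x y) ^ (-α) := by
    unfold hardyWeight
    gcongr ?_ * ?_
    refine Real.rpow_le_rpow_of_nonpos hρ ?_ (neg_nonpos.2 hα₀)
    exact (min_le_left _ _).trans_eq (dist_zero_right x)
  calc hardyWeight Ω α x * hardyKernel Ω α γ x y
      ≤ D * min (dist x 0) (dist x y) ^ (-α) * (4 * δ ^ (-γ) *
          min (dist x 0) (dist x y) ^ (-((finrank ℝ E : ℝ) - 2 - α))) := by
        grw [hardyKernel_le_of_le_infDist hα₀ hα hγ₀ hγ₁ hδ hx₀ hx hy, weight_le]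
        exact hardyWeight_nonneg
    _ = D * (4 * δ ^ (-γ)) * (min (dist x 0) (dist x y) ^ (-α) *
          min (dist x 0) (dist x y) ^ (-((finrank ℝ E : ℝ) - 2 - α))) := by ring
    _ = D * (4 * δ ^ (-γ)) * min (dist x 0) (dist x y) ^ (-((finrank ℝ E : ℝ) - 2)) := by
      rw [← Real.rpow_add hρ]; ring_nf

theorem hardyKernel_le_of_le_norm (hα₀ : 0 ≤ α) (hγ₀ : 0 ≤ γ) (hγ₁ : γ ≤ 1) (hδ : 0 < δ)
    (hx₀ : δ ≤ ‖x‖) (hx : 0 < infDist x (frontier Ω)) (hy : 0 < infDist y (frontier Ω)) :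
    hardyKernel Ω α γ x y ≤
      4 * δ ^ (-α) * dist x y ^ (-((finrank ℝ E : ℝ) - 2 + γ - 2 * α)) := by
  rcases eq_or_ne x y with rfl | hxy
  · rw [hardyKernel_self]; positivity
  have hr : 0 < dist x y := dist_pos.2 hxy
  calc hardyKernel Ω α γ x y
      ≤ ‖x‖ ^ (-α) * dist x y ^ (-(finrank ℝ E : ℝ) + 2 + 2 * α) *
          (4 * max (infDist x (frontier Ω)) (dist x y) ^ (-γ)) := hardyKernel_le hγ₀ hγ₁ hx hy
    _ ≤ δ ^ (-α) * dist x y ^ (-(finrank ℝ E : ℝ) + 2 + 2 * α) * (4 * dist x y ^ (-γ)) := by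
      gcongr ?_ * _ * (4 * ?_)
      · exact Real.rpow_le_rpow_of_nonpos hδ hx₀ (by linarith)
      · exact Real.rpow_le_rpow_of_nonpos hr (le_max_right _ _) (by linarith)
    _ = 4 * δ ^ (-α) *
          (dist x y ^ (-(finrank ℝ E : ℝ) + 2 + 2 * α) * dist x y ^ (-γ)) := by ring
    _ = 4 * δ ^ (-α) * dist x y ^ (-((finrank ℝ E : ℝ) - 2 + γ - 2 * α)) := by
      rw [← Real.rpow_add hr]; ring_nf

theorem hardyWeight_mul_hardyKernel_le_of_le_norm {D : ℝ} (hα₀ : 0 ≤ α) (hγ₀ : 0 ≤ γ)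
    (hγ₁ : γ ≤ 1) (hδ : 0 < δ) (hx₀ : δ ≤ ‖x‖) (hx : 0 < infDist x (frontier Ω))
    (hxD : infDist x (frontier Ω) ≤ D) (hy : 0 < infDist y (frontier Ω)) :
    hardyWeight Ω α x * hardyKernel Ω α γ x y ≤
      4 * δ ^ (-2 * α) * D ^ (1 - γ) * dist x y ^ (-((finrank ℝ E : ℝ) - 2 - 2 * α)) := by
  set a := infDist x (frontier Ω) with ha
  calc hardyWeight Ω α x * hardyKernel Ω α γ x y
      ≤ a * ‖x‖ ^ (-α) * (‖x‖ ^ (-α) * dist x y ^ (-(finrank ℝ E : ℝ) + 2 + 2 * α) *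
          (4 * max a (dist x y) ^ (-γ))) := by
        rw [hardyWeight, ← ha]; gcongr; exact hardyKernel_le hγ₀ hγ₁ hx hy
    _ ≤ a * δ ^ (-α) * (δ ^ (-α) * dist x y ^ (-(finrank ℝ E : ℝ) + 2 + 2 * α) *
          (4 * a ^ (-γ))) := by
      have : ‖x‖ ^ (-α) ≤ δ ^ (-α) := Real.rpow_le_rpow_of_nonpos hδ hx₀ (by linarith)
      gcongr _ * ?_ * (?_ * _ * (4 * ?_))
      exact Real.rpow_le_rpow_of_nonpos hx (le_max_left _ _) (by linarith)
    _ = 4 * δ ^ (-2 * α) * a ^ (1 - γ) *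
          dist x y ^ (-((finrank ℝ E : ℝ) - 2 - 2 * α)) := by
      rw [show -2 * α = -α + -α by ring, Real.rpow_add hδ, sub_eq_add_neg 1 γ, Real.rpow_add hx,
        Real.rpow_one]
      ring_nf
    _ ≤ 4 * δ ^ (-2 * α) * D ^ (1 - γ) *
          dist x y ^ (-((finrank ℝ E : ℝ) - 2 - 2 * α)) := by gcongr

end HardyKernel

section HardyMeasure

variable {E : Type*} [NormedAddCommGroup E] [MeasurableSpace E]

/-- The measure `d(x)|x|^{-α} dx` on the punctured domain `Ω \ {0}`, relative to which the
potential is estimated. -/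
noncomputable def hardyMeasure (μ : Measure E) (Ω : Set E) (α : ℝ) : Measure E :=
  (μ.restrict (Ω \ {0})).withDensity fun x ↦ .ofReal (hardyWeight Ω α x)

variable [BorelSpace E] {μ : Measure E} {Ω T B : Set E} {α : ℝ}

theorem measurable_hardyWeight : Measurable (hardyWeight Ω α) := by
  unfold hardyWeight; fun_prop

theorem hardyMeasure_apply [SFinite μ] (hΩ : MeasurableSet Ω) (s : Set E) :
    hardyMeasure μ Ω α s = ∫⁻ x in Ω \ {0} ∩ s, .ofReal (hardyWeight Ω α x) ∂μ := by
  rw [hardyMeasure, withDensity_apply', Measure.restrict_restrict' (hΩ.diff (.singleton 0)),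
    inter_comm]

theorem ae_restrict_hardyMeasure (hΩ : MeasurableSet Ω) (hT : MeasurableSet T) {P : E → Prop}
    (h : ∀ x ∈ Ω, x ≠ 0 → x ∈ T → P x) : ∀ᵐ x ∂(hardyMeasure μ Ω α).restrict T, P x := by
  have mem_punctured : ∀ᵐ x ∂hardyMeasure μ Ω α, x ∈ Ω \ {0} :=
    (withDensity_absolutelyContinuous _ _).ae_le (ae_restrict_mem (hΩ.diff (.singleton 0)))
  filter_upwards [ae_restrict_mem hT, ae_restrict_of_ae mem_punctured] with x hxT hx
  exact h x hx.1 hx.2 hxT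

theorem setLIntegral_restrict_hardyMeasure_le (hΩ : MeasurableSet Ω) (hT : MeasurableSet T)
    (hB : MeasurableSet B) {f g : E → ℝ}
    (h : ∀ x ∈ Ω, x ≠ 0 → x ∈ T → hardyWeight Ω α x * f x ≤ g x) :
    ∫⁻ x in B, .ofReal (f x) ∂((hardyMeasure μ Ω α).restrict T) ≤ ∫⁻ x in B, .ofReal (g x) ∂μ := by
  have hBT : MeasurableSet (B ∩ T) := hB.inter hT
  rw [Measure.restrict_restrict hB, hardyMeasure, restrict_withDensity hBT,
    Measure.restrict_restrict hBT]
  calc _ ≤ ∫⁻ x in B ∩ T ∩ (Ω \ {0}), .ofReal (hardyWeight Ω α x) * .ofReal (f x) ∂μ :=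
        lintegral_withDensity_le_lintegral_mul _ measurable_hardyWeight.ennreal_ofReal _
    _ ≤ ∫⁻ x in B ∩ T ∩ (Ω \ {0}), .ofReal (g x) ∂μ := by
      refine setLIntegral_mono' (hBT.inter (hΩ.diff (.singleton 0))) fun x hx ↦ ?_
      rw [← ENNReal.ofReal_mul hardyWeight_nonneg]
      exact ENNReal.ofReal_le_ofReal (h x hx.2.1 hx.2.2 hx.1.2)
    _ ≤ ∫⁻ x in B, .ofReal (g x) ∂μ :=
      lintegral_mono_set (inter_subset_left.trans inter_subset_left)

variable [NormedSpace ℝ E] [FiniteDimensional ℝ E] [μ.IsAddHaarMeasure]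

theorem isFiniteMeasure_hardyMeasure [Nontrivial E] (hΩb : Bornology.IsBounded Ω)
    (hΩ : MeasurableSet Ω) (hα : α < finrank ℝ E) : IsFiniteMeasure (hardyMeasure μ Ω α) := by
  obtain ⟨R, hR, hΩR⟩ := hΩb.subset_ball_lt 0 0
  refine ⟨?_⟩
  calc hardyMeasure μ Ω α univ
      = ∫⁻ x in Ω \ {0}, .ofReal (hardyWeight Ω α x) ∂μ := by
        rw [hardyMeasure_apply hΩ, inter_univ]
    _ ≤ ∫⁻ x in Ω \ {0}, .ofReal (diam Ω) * .ofReal (dist x 0 ^ (-α)) ∂μ := by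
      refine setLIntegral_mono' (hΩ.diff (.singleton 0)) fun x hx ↦ ?_
      rw [← ENNReal.ofReal_mul diam_nonneg, dist_zero_right, hardyWeight]
      gcongr
      exact infDist_frontier_le_diam hΩb hx.1
    _ ≤ ∫⁻ x in ball 0 R, .ofReal (diam Ω) * .ofReal (dist x 0 ^ (-α)) ∂μ :=
      lintegral_mono_set (sdiff_subset.trans hΩR)
    _ = .ofReal (diam Ω) * (.ofReal (R ^ (finrank ℝ E - α)) * unitBallMass μ α) := by
      rw [lintegral_const_mul' _ _ ENNReal.ofReal_ne_top, setLIntegral_ball_dist_rpow μ α 0 hR]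
    _ < ∞ := by
      have := unitBallMass_ne_top μ hα
      finiteness

end HardyMeasure

section Potential

variable {E : Type*} [NormedAddCommGroup E] [NormedSpace ℝ E] [FiniteDimensional ℝ E]
  [MeasurableSpace E] [BorelSpace E] {μ : Measure E} [μ.IsAddHaarMeasure] {Ω : Set E}
  {α γ δ : ℝ}

theorem measurable_uncurry_hardyKernel : Measurable (Function.uncurry (hardyKernel Ω α γ)) := by
  unfold hardyKernel Function.uncurry; fun_prop

theorem exists_hasMarcinkiewiczBound_hardyKernel_ball (hN : 2 < finrank ℝ E) (hΩo : IsOpen Ω)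
    (hΩb : Bornology.IsBounded Ω) (hα₀ : 0 ≤ α) (hα : α ≤ ((finrank ℝ E : ℝ) - 2) / 2)
    (hγ₀ : 0 ≤ γ) (hγ₁ : γ ≤ 1) (hδ : 0 < δ)
    (hball : ∀ x ∈ ball 0 δ, δ ≤ infDist x (frontier Ω)) :
    ∃ A ≠ ∞, ∀ y ∈ Ω, HasMarcinkiewiczBound ((hardyMeasure μ Ω α).restrict (ball 0 δ))
      (fun x ↦ .ofReal (hardyKernel Ω α γ x y))
      (((finrank ℝ E : ℝ) - 2 - α) / (finrank ℝ E - α)) A := by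
  have : Nontrivial E := Module.nontrivial_of_finrank_pos (R := ℝ) (by lia)
  have hN' : (2 : ℝ) < finrank ℝ E := mod_cast hN
  have := isFiniteMeasure_hardyMeasure (μ := μ) hΩb hΩo.measurableSet
    (show α < finrank ℝ E by linarith)
  have mass_ne_top : unitBallMass μ ((finrank ℝ E : ℝ) - 2) ≠ ∞ :=
    unitBallMass_ne_top μ (by linarith)
  refine ⟨.ofReal (4 * δ ^ (-γ)) + .ofReal (diam Ω * (4 * δ ^ (-γ))) *
    (2 * unitBallMass μ ((finrank ℝ E : ℝ) - 2)), by finiteness, fun y hy ↦ ?_⟩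
  have hy_pos := infDist_frontier_pos hΩo hΩb hy
  have hρ : Measurable fun x ↦ min (dist x 0) (dist x y) := by fun_prop
  refine .of_gauge hρ (by linarith) (by linarith) ?_ fun R hR ↦ ?_
  · refine ae_restrict_hardyMeasure hΩo.measurableSet measurableSet_ball fun x _ hx₀ hx _ ↦ ?_
    rw [← ENNReal.ofReal_mul (by positivity)]
    exact ENNReal.ofReal_le_ofReal
      (hardyKernel_le_of_le_infDist hα₀ hα hγ₀ hγ₁ hδ hx₀ (hball x hx) hy_pos)
  · calc _ ≤ ∫⁻ x in {x | min (dist x 0) (dist x y) < R}, .ofReal (diam Ω * (4 * δ ^ (-γ)) *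
            min (dist x 0) (dist x y) ^ (-((finrank ℝ E : ℝ) - 2))) ∂μ :=
          setLIntegral_restrict_hardyMeasure_le hΩo.measurableSet measurableSet_ball
            (measurableSet_lt hρ measurable_const) fun x hxΩ hx₀ hx ↦
              hardyWeight_mul_hardyKernel_le_of_le_infDist hα₀ hα hγ₀ hγ₁ hδ hx₀ (hball x hx)
                (infDist_frontier_le_diam hΩb hxΩ) hy_pos
      _ ≤ .ofReal (diam Ω * (4 * δ ^ (-γ))) * (2 * (.ofReal
            (R ^ (finrank ℝ E - ((finrank ℝ E : ℝ) - 2))) *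
              unitBallMass μ ((finrank ℝ E : ℝ) - 2))) := by
        simp only [ENNReal.ofReal_mul (mul_nonneg (diam_nonneg (s := Ω))
          (show 0 ≤ 4 * δ ^ (-γ) by positivity))]
        rw [lintegral_const_mul' _ _ ENNReal.ofReal_ne_top]
        gcongr
        exact setLIntegral_min_dist_rpow_le μ _ 0 y hR
      _ = _ := by ring_nf

theorem exists_hasMarcinkiewiczBound_hardyKernel_compl_ball (hN : 2 < finrank ℝ E)
    (hΩo : IsOpen Ω) (hΩb : Bornology.IsBounded Ω) (hα₀ : 0 ≤ α)
    (hα : α ≤ ((finrank ℝ E : ℝ) - 2) / 2) (hγ₀ : 0 ≤ γ) (hγ₁ : γ ≤ 1) (hδ : 0 < δ) :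
    ∃ A ≠ ∞, ∀ y ∈ Ω, HasMarcinkiewiczBound ((hardyMeasure μ Ω α).restrict (ball 0 δ)ᶜ)
      (fun x ↦ .ofReal (hardyKernel Ω α γ x y))
      (((finrank ℝ E : ℝ) - 2 + γ - 2 * α) / (finrank ℝ E + γ)) A := by
  have : Nontrivial E := Module.nontrivial_of_finrank_pos (R := ℝ) (by lia)
  have hN' : (2 : ℝ) < finrank ℝ E := mod_cast hN
  have := isFiniteMeasure_hardyMeasure (μ := μ) hΩb hΩo.measurableSet
    (show α < finrank ℝ E by linarith)
  have mass_ne_top : unitBallMass μ ((finrank ℝ E : ℝ) - 2 - 2 * α) ≠ ∞ :=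
    unitBallMass_ne_top μ (by linarith)
  have : 0 ≤ diam Ω := diam_nonneg
  refine ⟨.ofReal (4 * δ ^ (-α)) + .ofReal (4 * δ ^ (-2 * α) * diam Ω ^ (1 - γ)) *
    unitBallMass μ ((finrank ℝ E : ℝ) - 2 - 2 * α), by finiteness, fun y hy ↦ ?_⟩
  have hy_pos := infDist_frontier_pos hΩo hΩb hy
  have le_norm {x : E} (hx : x ∈ (ball 0 δ)ᶜ) : δ ≤ ‖x‖ := by simpa using hx
  refine .of_gauge (ρ := (dist · y)) (by fun_prop) (by linarith) (by linarith) ?_ fun R hR ↦ ?_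
  · refine ae_restrict_hardyMeasure hΩo.measurableSet measurableSet_ball.compl
      fun x hxΩ _ hx _ ↦ ?_
    rw [← ENNReal.ofReal_mul (by positivity)]
    exact ENNReal.ofReal_le_ofReal (hardyKernel_le_of_le_norm hα₀ hγ₀ hγ₁ hδ (le_norm hx)
      (infDist_frontier_pos hΩo hΩb hxΩ) hy_pos)
  · calc _ ≤ ∫⁻ x in ball y R, .ofReal (4 * δ ^ (-2 * α) * diam Ω ^ (1 - γ) *
            dist x y ^ (-((finrank ℝ E : ℝ) - 2 - 2 * α))) ∂μ :=
          setLIntegral_restrict_hardyMeasure_le hΩo.measurableSet measurableSet_ball.compl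
            measurableSet_ball fun x hxΩ _ hx ↦
              hardyWeight_mul_hardyKernel_le_of_le_norm hα₀ hγ₀ hγ₁ hδ (le_norm hx)
                (infDist_frontier_pos hΩo hΩb hxΩ) (infDist_frontier_le_diam hΩb hxΩ) hy_pos
      _ = .ofReal (4 * δ ^ (-2 * α) * diam Ω ^ (1 - γ)) * (.ofReal
            (R ^ (finrank ℝ E - ((finrank ℝ E : ℝ) - 2 - 2 * α))) *
              unitBallMass μ ((finrank ℝ E : ℝ) - 2 - 2 * α)) := by
        simp only [ENNReal.ofReal_mul (show 0 ≤ 4 * δ ^ (-2 * α) * diam Ω ^ (1 - γ) by positivity)]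
        rw [lintegral_const_mul' _ _ ENNReal.ofReal_ne_top, setLIntegral_ball_dist_rpow μ _ y hR]
      _ = _ := by ring_nf

end Potential

section Exponent

variable {N : ℕ} {α γ : ℝ}

theorem one_le_pExp (hN : 2 < N) (hα₀ : 0 ≤ α) (hα : α ≤ ((N : ℝ) - 2) / 2) (hγ₀ : 0 ≤ γ) :
    1 ≤ pExp N α γ := by
  have hN' : (2 : ℝ) < N := mod_cast hN
  have one_le_left : 1 ≤ ((N : ℝ) - α) / ((N : ℝ) - 2 - α) := by
    rw [one_le_div (by linarith)]; linarith
  unfold pExp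
  split_ifs with h
  · exact one_le_left
  · refine le_min one_le_left ?_
    rw [one_le_div (lt_of_le_of_ne (by linarith) (Ne.symm h))]; linarith

theorem sub_two_sub_div_le_one_div_pExp (hN : 2 < N) (hα₀ : 0 ≤ α)
    (hα : α ≤ ((N : ℝ) - 2) / 2) (hγ₀ : 0 ≤ γ) :
    ((N : ℝ) - 2 - α) / (N - α) ≤ 1 / pExp N α γ := by
  rw [← one_div_div]
  refine one_div_le_one_div_of_le (one_pos.trans_le (one_le_pExp hN hα₀ hα hγ₀)) ?_
  unfold pExp
  split_ifs
  exacts [le_rfl, min_le_left _ _]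

theorem sub_two_add_sub_div_le_one_div_pExp (hN : 2 < N) (hα₀ : 0 ≤ α)
    (hα : α ≤ ((N : ℝ) - 2) / 2) (hγ₀ : 0 ≤ γ) :
    ((N : ℝ) - 2 + γ - 2 * α) / (N + γ) ≤ 1 / pExp N α γ := by
  have hp : 0 < pExp N α γ := one_pos.trans_le (one_le_pExp hN hα₀ hα hγ₀)
  by_cases h : (N : ℝ) - 2 + γ - 2 * α = 0
  · rw [h, zero_div]; positivity
  · rw [← one_div_div]
    refine one_div_le_one_div_of_le hp ?_
    rw [pExp, if_neg h]
    exact min_le_right _ _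

end Exponent

section WeakEstimate

variable {E : Type*} [NormedAddCommGroup E] [NormedSpace ℝ E] [FiniteDimensional ℝ E]
  [MeasurableSpace E] [BorelSpace E] {Ω : Set E} {α γ : ℝ}

theorem exists_hasMarcinkiewiczBound_hardyKernel (μ : Measure E) [μ.IsAddHaarMeasure]
    (hN : 2 < finrank ℝ E) (hΩo : IsOpen Ω) (hΩb : Bornology.IsBounded Ω) (h0 : (0 : E) ∈ Ω)
    (hα₀ : 0 ≤ α) (hα : α ≤ ((finrank ℝ E : ℝ) - 2) / 2) (hγ₀ : 0 ≤ γ) (hγ₁ : γ ≤ 1) :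
    ∃ A ≠ ∞, ∀ y ∈ Ω, HasMarcinkiewiczBound (hardyMeasure μ Ω α)
      (fun x ↦ .ofReal (hardyKernel Ω α γ x y)) (1 / pExp (finrank ℝ E) α γ) A := by
  have : Nontrivial E := Module.nontrivial_of_finrank_pos (R := ℝ) (by lia)
  have hN' : (2 : ℝ) < finrank ℝ E := mod_cast hN
  have := isFiniteMeasure_hardyMeasure (μ := μ) hΩb hΩo.measurableSet
    (show α < finrank ℝ E by linarith)
  obtain ⟨δ, hδ, hball⟩ := exists_forall_mem_ball_le_infDist_frontier hΩo hΩb h0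
  obtain ⟨A, hA_ne_top, hA⟩ := exists_hasMarcinkiewiczBound_hardyKernel_ball (μ := μ) hN hΩo hΩb
    hα₀ hα hγ₀ hγ₁ hδ hball
  obtain ⟨B, hB_ne_top, hB⟩ := exists_hasMarcinkiewiczBound_hardyKernel_compl_ball (μ := μ) hN hΩo
    hΩb hα₀ hα hγ₀ hγ₁ hδ
  set p := pExp (finrank ℝ E) α γ
  have hp : 1 / p ≤ 1 := by
    simpa using one_div_le_one_div_of_le one_pos (one_le_pExp hN hα₀ hα hγ₀)
  have hA_le := sub_two_sub_div_le_one_div_pExp hN hα₀ hα hγ₀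
  have hB_le := sub_two_add_sub_div_le_one_div_pExp hN hα₀ hα hγ₀
  have mul_rpow_ne_top (T : Set E) {M : ℝ≥0∞} {θ : ℝ} (hM : M ≠ ∞) (hθ : θ ≤ 1 / p) :
      M * (hardyMeasure μ Ω α).restrict T univ ^ (1 / p - θ) ≠ ∞ :=
    ENNReal.mul_ne_top hM (ENNReal.rpow_ne_top_of_nonneg (sub_nonneg.2 hθ) (measure_ne_top _ _))
  exact ⟨_, ENNReal.add_ne_top.2 ⟨mul_rpow_ne_top _ hA_ne_top hA_le,
    mul_rpow_ne_top _ hB_ne_top hB_le⟩, fun y hy ↦ .of_restrict_compl measurableSet_ball hp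
      ((hA y hy).mono_exponent hA_le hp) ((hB y hy).mono_exponent hB_le hp)⟩

theorem weak_estimate_F_minus_general (μ : Measure E) [μ.IsAddHaarMeasure]
    (hN : 2 < finrank ℝ E) (hΩo : IsOpen Ω) (hΩb : Bornology.IsBounded Ω) (h0 : (0 : E) ∈ Ω)
    (hα₀ : 0 ≤ α) (hα : α ≤ ((finrank ℝ E : ℝ) - 2) / 2) (hγ₀ : 0 ≤ γ) (hγ₁ : γ ≤ 1) :
    ∃ C : ℝ, 0 < C ∧ ∀ (ω : Measure E) [SFinite ω] (t : ℝ), 0 < t →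
      ∫⁻ x in {x | x ∈ Ω \ {0} ∧
          .ofReal t < ∫⁻ y in Ω \ {0}, .ofReal (hardyKernel Ω α γ x y) ∂ω},
        .ofReal (hardyWeight Ω α x) ∂μ ≤
      .ofReal (C * t ^ (-pExp (finrank ℝ E) α γ)) * ω (Ω \ {0}) ^ pExp (finrank ℝ E) α γ := by
  have : Nontrivial E := Module.nontrivial_of_finrank_pos (R := ℝ) (by lia)
  have hN' : (2 : ℝ) < finrank ℝ E := mod_cast hN
  have := isFiniteMeasure_hardyMeasure (μ := μ) hΩb hΩo.measurableSet
    (show α < finrank ℝ E by linarith)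
  obtain ⟨A, hA_ne_top, hA⟩ :=
    exists_hasMarcinkiewiczBound_hardyKernel μ hN hΩo hΩb h0 hα₀ hα hγ₀ hγ₁
  have hp := one_pos.trans_le (one_le_pExp hN hα₀ hα hγ₀)
  set p := pExp (finrank ℝ E) α γ
  refine ⟨(A.toReal + 1) ^ p, by positivity, fun ω _ t ht ↦ ?_⟩
  have hΩ₀ : MeasurableSet (Ω \ {0}) := hΩo.measurableSet.diff (.singleton 0)
  have kernel_meas := (measurable_uncurry_hardyKernel (Ω := Ω) (α := α) (γ := γ)).ennreal_ofReal
  have potential_bound := HasMarcinkiewiczBound.lintegral_kernel kernel_meas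
    ((ae_restrict_mem (μ := ω) hΩ₀).mono fun y hy ↦ hA y hy.1)
  have A_le : A ≤ .ofReal (A.toReal + 1) :=
    (ENNReal.ofReal_toReal hA_ne_top).symm.trans_le (ENNReal.ofReal_le_ofReal (by linarith))
  calc _ = hardyMeasure μ Ω α {x | .ofReal t <
          ∫⁻ y in Ω \ {0}, .ofReal (hardyKernel Ω α γ x y) ∂ω} :=
        (hardyMeasure_apply hΩo.measurableSet _).symm
    _ ≤ (A * ω.restrict (Ω \ {0}) univ / .ofReal t) ^ (1 / (1 / p)) :=
      potential_bound.measure_lt_le kernel_meas.lintegral_prod_right' (by positivity)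
        (by simpa using ht) ENNReal.ofReal_ne_top
    _ ≤ (.ofReal (A.toReal + 1) * ω (Ω \ {0}) / .ofReal t) ^ p := by
      rw [one_div_one_div, Measure.restrict_apply_univ]; gcongr
    _ = .ofReal ((A.toReal + 1) ^ p * t ^ (-p)) * ω (Ω \ {0}) ^ p := by
      rw [ENNReal.div_rpow_of_nonneg _ _ hp.le, ENNReal.mul_rpow_of_nonneg _ _ hp.le,
        ENNReal.ofReal_mul (by positivity), ← ENNReal.ofReal_rpow_of_pos ht,
        ← ENNReal.ofReal_rpow_of_pos (by positivity), ENNReal.rpow_neg, div_eq_mul_inv]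
      ring

end WeakEstimate

/-- Weak Lebesgue estimate for the potential
`U(x) = ∫ |x|^{−α} |x−y|^{−N+2+2α} d(y)^{−γ} min{1, d(x)d(y)/|x−y|²} dω(y)`
with respect to the weight `d(x)|x|^{−α}`. -/
theorem weak_estimate_F_minus (N : ℕ) (hN : 2 < N) (Ω : Set (EuclideanSpace ℝ (Fin N)))
    (hΩo : IsOpen Ω) (hΩb : Bornology.IsBounded Ω) (h0 : (0 : EuclideanSpace ℝ (Fin N)) ∈ Ω)
    (α γ : ℝ) (hα0 : 0 < α) (hα : α ≤ ((N : ℝ) - 2) / 2) (hγ0 : 0 ≤ γ) (hγ1 : γ ≤ 1) :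
    ∃ C : ℝ, 0 < C ∧ ∀ (ω : Measure (EuclideanSpace ℝ (Fin N))), IsFiniteMeasure ω →
      ∀ t : ℝ, 0 < t →
      (∫⁻ x in {x | x ∈ Ω \ {0} ∧ ENNReal.ofReal t <
          ∫⁻ y in Ω \ {0}, ENNReal.ofReal
            (‖x‖ ^ (-α) * dist x y ^ (-(N : ℝ) + 2 + 2 * α) *
              infDist y (frontier Ω) ^ (-γ) *
              min 1 (infDist x (frontier Ω) * infDist y (frontier Ω) / dist x y ^ 2)) ∂ω},
        ENNReal.ofReal (infDist x (frontier Ω) * ‖x‖ ^ (-α)))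
      ≤ ENNReal.ofReal (C * t ^ (-(pExp N α γ))) * (ω (Ω \ {0})) ^ (pExp N α γ) := by
  rw [← finrank_euclideanSpace_fin (𝕜 := ℝ) (n := N)] at hN hα
  obtain ⟨C, hC, h⟩ := weak_estimate_F_minus_general volume hN hΩo hΩb h0 hα0.le hα hγ0 hγ1
  exact ⟨C, hC, fun ω _ ↦ by
    simpa only [hardyKernel, hardyWeight, finrank_euclideanSpace_fin] using h ω⟩
end

section
/- Let N > 2 be an integer, Ω ⊂ ℝ^N a nonempty bounded open set with 0 ∈ Ω, let 0 < α < N/2, set D_Ω = 2·sup_{x∈Ω}|x|, and let ρ ∈ [−1,1] ∖ {0}. For λ > 0 let Ã_λ = { x ∈ Ω ∖ {0} : |ρ| · d(x) |x|^{−α} |ln(|x|/D_Ω)| > λ } and m̃_λ = ∫_{Ã_λ} d(x)|x|^{−α} dx. Then there exists C = C(N, Ω, α) > 0 (independent of ρ) such that for every λ > 0: m̃_λ ≤ C · ( λ^{−1} ln(e+λ) )^{(N−α)/α} · ( |ρ| ln(e + |ρ|^{−1}) )^{(N−α)/α}. -/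
open MeasureTheory Metric Set

/-!
Put `φ s = s⁻¹ ln (e + s)`, which is submultiplicative up to a factor `2`. Dividing by `|ρ|`
reduces the level set for `ρ` at height `t` to the one for `ρ = 1` at height `s = t / |ρ|`. There,
with `v = (D / |x|) ^ α`, the defining inequality becomes `s < A v ln v` for a constant `A`. The
inverse of `v ↦ v ln v` is comparable to `s ↦ s / ln (e + s) = 1 / φ s`, so `|x| ^ α < K φ s` for a
constant `K`: the level set lies in a ball of radius `(K φ s) ^ (1 / α)`. The integral of
`|x| ^ (-α)` over that ball is a multiple of the power `N - α` of its radius.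
-/

/-- The decay profile `s⁻¹ ln (e + s)` of the estimate. The factor `|ρ| ln (e + |ρ|⁻¹)` is its value
at `|ρ|⁻¹`. -/
noncomputable def logDecay (s : ℝ) : ℝ :=
  s⁻¹ * Real.log (Real.exp 1 + s)

section LogDecay

variable {a b s : ℝ}

lemma one_lt_log_exp_one_add (hs : 0 < s) : 1 < Real.log (Real.exp 1 + s) := by
  rw [Real.lt_log_iff_exp_lt (by positivity)]
  exact lt_add_of_pos_right _ hs

lemma inv_lt_logDecay (hs : 0 < s) : s⁻¹ < logDecay s :=
  lt_mul_of_one_lt_right (inv_pos.mpr hs) (one_lt_log_exp_one_add hs)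

lemma logDecay_pos (hs : 0 < s) : 0 < logDecay s :=
  (inv_pos.mpr hs).trans (inv_lt_logDecay hs)

lemma log_exp_one_add_mul_le (ha : 0 < a) (hb : 0 < b) :
    Real.log (Real.exp 1 + a * b) ≤
      2 * (Real.log (Real.exp 1 + a) * Real.log (Real.exp 1 + b)) := by
  have hsum : Real.log (Real.exp 1 + a * b) ≤
      Real.log (Real.exp 1 + a) + Real.log (Real.exp 1 + b) := by
    rw [← Real.log_mul (by positivity) (by positivity)]
    apply Real.log_le_log (by positivity)
    have he : 1 ≤ Real.exp 1 := Real.one_le_exp zero_le_one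
    nlinarith [mul_pos (Real.exp_pos 1) ha, mul_pos (Real.exp_pos 1) hb]
  nlinarith [one_lt_log_exp_one_add ha, one_lt_log_exp_one_add hb]

lemma logDecay_mul_le (ha : 0 < a) (hb : 0 < b) :
    logDecay (a * b) ≤ 2 * (logDecay a * logDecay b) :=
  calc logDecay (a * b)
      ≤ (a * b)⁻¹ * (2 * (Real.log (Real.exp 1 + a) * Real.log (Real.exp 1 + b))) :=
        mul_le_mul_of_nonneg_left (log_exp_one_add_mul_le ha hb) (by positivity)
    _ = 2 * (logDecay a * logDecay b) := by
        simp only [logDecay, mul_inv]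
        ring

lemma inv_lt_mul_logDecay_of_lt_mul_log {A v : ℝ} (hA : 0 ≤ A) (hv : 0 < v) (hs : 0 < s)
    (h : s < A * (v * Real.log v)) : v⁻¹ < (A + 1) * logDecay s := by
  have hφ : 0 < logDecay s := logDecay_pos hs
  rcases le_or_gt s v with hsv | hvs
  · calc v⁻¹ ≤ s⁻¹ := inv_anti₀ hs hsv
      _ < logDecay s := inv_lt_logDecay hs
      _ ≤ (A + 1) * logDecay s := le_mul_of_one_le_left hφ.le (by linarith)
  · have hlog : Real.log v ≤ Real.log (Real.exp 1 + s) :=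
      Real.log_le_log hv (by linarith [Real.exp_pos 1])
    calc v⁻¹ = s⁻¹ * v⁻¹ * s := by field_simp
      _ ≤ s⁻¹ * v⁻¹ * (A * (v * Real.log v)) := by gcongr
      _ = A * (s⁻¹ * Real.log v) := by field_simp
      _ ≤ A * logDecay s := by unfold logDecay; gcongr
      _ < (A + 1) * logDecay s := by linarith

lemma rpow_lt_mul_logDecay {α M D w r : ℝ} (hα : 0 < α) (hr : 0 < r) (hrD : r ≤ D)
    (hw : |w| ≤ M) (hs : 0 < s) (h : s < |w * r ^ (-α) * Real.log (r / D)|) :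
    r ^ α < (M / α + D ^ α) * logDecay s := by
  have hD : 0 < D := hr.trans_le hrD
  have hM : 0 ≤ M := (abs_nonneg w).trans hw
  set v := (D / r) ^ α with hv
  have hv0 : 0 < v := by positivity
  have hr_neg : r ^ (-α) = D ^ (-α) * v := by
    rw [hv, Real.div_rpow hD.le hr.le, Real.rpow_neg hr.le, Real.rpow_neg hD.le]
    field_simp
  have hlog : |Real.log (r / D)| = Real.log v / α := by
    have hDr : 0 ≤ Real.log (D / r) := Real.log_nonneg ((one_le_div hr).mpr hrD)
    rw [← inv_div, Real.log_inv, abs_neg, abs_of_nonneg hDr, hv, Real.log_rpow (by positivity)]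
    field_simp
  have hsv : s < M * D ^ (-α) / α * (v * Real.log v) :=
    calc s < |w| * r ^ (-α) * |Real.log (r / D)| := by
          rwa [abs_mul, abs_mul, abs_of_pos (Real.rpow_pos_of_pos hr _)] at h
      _ ≤ M * r ^ (-α) * |Real.log (r / D)| := by gcongr
      _ = M * D ^ (-α) / α * (v * Real.log v) := by rw [hlog, hr_neg]; ring
  have hinv : v⁻¹ < (M * D ^ (-α) / α + 1) * logDecay s :=
    inv_lt_mul_logDecay_of_lt_mul_log (by positivity) hv0 hs hsv
  calc r ^ α = D ^ α * v⁻¹ := by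
        rw [hv, Real.div_rpow hD.le hr.le]
        field_simp
    _ < D ^ α * ((M * D ^ (-α) / α + 1) * logDecay s) := by gcongr
    _ = (M / α + D ^ α) * logDecay s := by
        rw [Real.rpow_neg hD.le]
        field_simp

end LogDecay

lemma lt_abs_mul_iff_mul_inv_lt {ρ t y : ℝ} (hρ : ρ ≠ 0) : t < |ρ * y| ↔ t * |ρ|⁻¹ < |y| := by
  rw [abs_mul, ← div_eq_mul_inv, div_lt_iff₀' (abs_pos.mpr hρ)]

lemma pow_pred_mul_rpow {n : ℕ} (hn : n ≠ 0) {y : ℝ} (hy : 0 < y) (p : ℝ) :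
    y ^ (n - 1) * y ^ p = y ^ (n + p - 1) := by
  rw [← Real.rpow_natCast, ← Real.rpow_add hy, Nat.cast_pred (Nat.pos_of_ne_zero hn),
    sub_add_eq_add_sub]

section BallIntegral

open Module (finrank finrank_pos)

variable {E F : Type*} [NormedAddCommGroup E] [NormedSpace ℝ E] [FiniteDimensional ℝ E]
  [Nontrivial E] [MeasurableSpace E] [BorelSpace E] [NormedAddCommGroup F] [NormedSpace ℝ F]
  (μ : Measure E) [μ.IsAddHaarMeasure]

lemma setIntegral_ball_fun_norm_addHaar (f : ℝ → F) (r : ℝ) :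
    ∫ x in ball (0 : E) r, f ‖x‖ ∂μ =
      finrank ℝ E • μ.real (ball 0 1) • ∫ y in Ioo 0 r, y ^ (finrank ℝ E - 1) • f y := by
  calc ∫ x in ball (0 : E) r, f ‖x‖ ∂μ
      = ∫ x, (Iio r).indicator f ‖x‖ ∂μ := by
        rw [← integral_indicator measurableSet_ball]
        simp only [indicator, mem_ball_zero_iff, mem_Iio]
    _ = finrank ℝ E • μ.real (ball 0 1) •
          ∫ y in Ioi 0, y ^ (finrank ℝ E - 1) • (Iio r).indicator f y :=
        integral_fun_norm_addHaar μ _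
    _ = finrank ℝ E • μ.real (ball 0 1) • ∫ y in Ioo 0 r, y ^ (finrank ℝ E - 1) • f y := by
        simp_rw [← indicator_smul_apply (Iio r) (fun y : ℝ ↦ y ^ (finrank ℝ E - 1)) f]
        rw [setIntegral_indicator measurableSet_Iio, Ioi_inter_Iio]

variable {p r : ℝ}

lemma integrableOn_ball_norm_rpow (hp : -(finrank ℝ E : ℝ) < p) :
    IntegrableOn (fun x : E ↦ ‖x‖ ^ p) (ball 0 r) μ := by
  rw [integrableOn_fun_norm_addHaar μ (f := fun y : ℝ ↦ y ^ p)]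
  refine IntegrableOn.congr_fun ?_
    (fun y hy ↦ (pow_pred_mul_rpow finrank_pos.ne' hy.1 p).symm) measurableSet_Ioo
  rcases le_or_gt r 0 with hr | hr
  · simp [Ioo_eq_empty_of_le hr]
  · rw [← intervalIntegrable_iff_integrableOn_Ioo_of_le hr.le]
    exact intervalIntegral.intervalIntegrable_rpow' (by linarith)

lemma setIntegral_ball_norm_rpow (hp : -(finrank ℝ E : ℝ) < p) (hr : 0 ≤ r) :
    ∫ x in ball (0 : E) r, ‖x‖ ^ p ∂μ =
      finrank ℝ E * μ.real (ball 0 1) / (finrank ℝ E + p) * r ^ (finrank ℝ E + p) := by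
  have hpos : 0 < finrank ℝ E + p := by linarith
  have hradial : ∫ y in Ioo 0 r, y ^ (finrank ℝ E - 1) * y ^ p =
      r ^ (finrank ℝ E + p) / (finrank ℝ E + p) := by
    rw [setIntegral_congr_fun measurableSet_Ioo
        (fun y hy ↦ pow_pred_mul_rpow finrank_pos.ne' hy.1 p),
      ← integral_Ioc_eq_integral_Ioo, ← intervalIntegral.integral_of_le hr,
      integral_rpow (Or.inl (by linarith)), sub_add_cancel, Real.zero_rpow hpos.ne', sub_zero]
  rw [setIntegral_ball_fun_norm_addHaar μ (fun y ↦ y ^ p), nsmul_eq_mul]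
  simp only [smul_eq_mul, hradial]
  ring

lemma setLIntegral_ball_norm_rpow (hp : -(finrank ℝ E : ℝ) < p) (hr : 0 ≤ r) :
    ∫⁻ x in ball (0 : E) r, ENNReal.ofReal (‖x‖ ^ p) ∂μ =
      ENNReal.ofReal
        (finrank ℝ E * μ.real (ball 0 1) / (finrank ℝ E + p) * r ^ (finrank ℝ E + p)) := by
  rw [← setIntegral_ball_norm_rpow μ hp hr,
    ofReal_integral_eq_lintegral_ofReal (integrableOn_ball_norm_rpow μ hp)
      (ae_of_all _ fun x ↦ by positivity)]

end BallIntegral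

section LevelSet

open Module (finrank)

variable {E : Type*} [NormedAddCommGroup E] {Ω : Set E} {w : E → ℝ} {α M D s : ℝ}

lemma superlevelSet_subset_ball (hα : 0 < α) (hw : ∀ x ∈ Ω, |w x| ≤ M) (hΩ : ∀ x ∈ Ω, ‖x‖ ≤ D)
    (hs : 0 < s) :
    {x | x ∈ Ω \ {0} ∧ s < |w x * ‖x‖ ^ (-α) * Real.log (‖x‖ / D)|} ⊆
      ball 0 (((M / α + D ^ α) * logDecay s) ^ α⁻¹) := by
  rintro x ⟨⟨hx, hx0⟩, hsx⟩
  have hpow : ‖x‖ ^ α < (M / α + D ^ α) * logDecay s :=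
    rpow_lt_mul_logDecay hα (norm_pos_iff.mpr hx0) (hΩ x hx) (hw x hx) hs hsx
  have hpos : 0 ≤ ‖x‖ ^ α := by positivity
  rw [mem_ball_zero_iff]
  exact (Real.lt_rpow_inv_iff_of_pos (norm_nonneg x) (hpos.trans hpow.le) hα).mpr hpow

variable [NormedSpace ℝ E] [FiniteDimensional ℝ E] [MeasurableSpace E] [BorelSpace E]
  (μ : Measure E) [μ.IsAddHaarMeasure]

lemma setLIntegral_superlevelSet_le (hα : 0 < α) (hαE : α < finrank ℝ E) (hM : 0 ≤ M)
    (hD : 0 ≤ D) (hw : ∀ x ∈ Ω, |w x| ≤ M) (hΩ : ∀ x ∈ Ω, ‖x‖ ≤ D) (hs : 0 < s) :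
    ∫⁻ x in {x | x ∈ Ω \ {0} ∧ s < |w x * ‖x‖ ^ (-α) * Real.log (‖x‖ / D)|},
        ENNReal.ofReal (w x * ‖x‖ ^ (-α)) ∂μ ≤
      ENNReal.ofReal
        (M * (finrank ℝ E * μ.real (ball 0 1) / (finrank ℝ E - α)) *
          ((M / α + D ^ α) * logDecay s) ^ ((finrank ℝ E - α) / α)) := by
  have : Nontrivial E := Module.nontrivial_of_finrank_pos (R := ℝ) (by exact_mod_cast hα.trans hαE)
  have hφ : 0 < logDecay s := logDecay_pos hs
  set R := ((M / α + D ^ α) * logDecay s) ^ α⁻¹ with hR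
  calc ∫⁻ x in {x | x ∈ Ω \ {0} ∧ s < |w x * ‖x‖ ^ (-α) * Real.log (‖x‖ / D)|},
        ENNReal.ofReal (w x * ‖x‖ ^ (-α)) ∂μ
      ≤ ∫⁻ x in {x | x ∈ Ω \ {0} ∧ s < |w x * ‖x‖ ^ (-α) * Real.log (‖x‖ / D)|},
          ENNReal.ofReal M * ENNReal.ofReal (‖x‖ ^ (-α)) ∂μ := by
        refine setLIntegral_mono (by fun_prop) fun x hx ↦ ?_
        rw [← ENNReal.ofReal_mul hM]
        have hwx : w x ≤ M := (le_abs_self _).trans (hw x hx.1.1)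
        gcongr
    _ ≤ ∫⁻ x in ball 0 R, ENNReal.ofReal M * ENNReal.ofReal (‖x‖ ^ (-α)) ∂μ :=
        lintegral_mono_set (superlevelSet_subset_ball hα hw hΩ hs)
    _ = ENNReal.ofReal (M * (finrank ℝ E * μ.real (ball 0 1) / (finrank ℝ E - α) *
          R ^ (finrank ℝ E - α))) := by
        rw [lintegral_const_mul' _ _ ENNReal.ofReal_ne_top,
          setLIntegral_ball_norm_rpow μ (neg_lt_neg hαE) (by positivity), ← ENNReal.ofReal_mul hM,
          ← sub_eq_add_neg]
    _ = _ := by rw [hR, ← Real.rpow_mul (by positivity), inv_mul_eq_div, mul_assoc M]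

lemma setLIntegral_superlevelSet_const_mul_le (hα : 0 < α) (hαE : α < finrank ℝ E) (hM : 0 ≤ M)
    (hD : 0 ≤ D) (hw : ∀ x ∈ Ω, |w x| ≤ M) (hΩ : ∀ x ∈ Ω, ‖x‖ ≤ D) {ρ t : ℝ} (hρ : ρ ≠ 0)
    (ht : 0 < t) :
    ∫⁻ x in {x | x ∈ Ω \ {0} ∧ t < |ρ * (w x * ‖x‖ ^ (-α) * Real.log (‖x‖ / D))|},
        ENNReal.ofReal (w x * ‖x‖ ^ (-α)) ∂μ ≤
      ENNReal.ofReal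
        (M * (finrank ℝ E * μ.real (ball 0 1) / (finrank ℝ E - α)) *
          (2 * (M / α + D ^ α)) ^ ((finrank ℝ E - α) / α) *
          logDecay t ^ ((finrank ℝ E - α) / α) * logDecay |ρ|⁻¹ ^ ((finrank ℝ E - α) / α)) := by
  have hρ' : 0 < |ρ|⁻¹ := inv_pos.mpr (abs_pos.mpr hρ)
  have hφt : 0 < logDecay t := logDecay_pos ht
  have hφρ : 0 < logDecay |ρ|⁻¹ := logDecay_pos hρ'
  have hφtρ : 0 < logDecay (t * |ρ|⁻¹) := logDecay_pos (mul_pos ht hρ')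
  have hK : (M / α + D ^ α) * logDecay (t * |ρ|⁻¹) ≤
      2 * (M / α + D ^ α) * logDecay t * logDecay |ρ|⁻¹ :=
    calc (M / α + D ^ α) * logDecay (t * |ρ|⁻¹)
        ≤ (M / α + D ^ α) * (2 * (logDecay t * logDecay |ρ|⁻¹)) := by
          gcongr
          exact logDecay_mul_le ht hρ'
      _ = 2 * (M / α + D ^ α) * logDecay t * logDecay |ρ|⁻¹ := by ring
  have hpow : ((M / α + D ^ α) * logDecay (t * |ρ|⁻¹)) ^ ((finrank ℝ E - α) / α) ≤
      (2 * (M / α + D ^ α)) ^ ((finrank ℝ E - α) / α) *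
        logDecay t ^ ((finrank ℝ E - α) / α) * logDecay |ρ|⁻¹ ^ ((finrank ℝ E - α) / α) := by
    rw [← Real.mul_rpow (by positivity) (by positivity),
      ← Real.mul_rpow (by positivity) (by positivity)]
    gcongr
  simp only [lt_abs_mul_iff_mul_inv_lt hρ]
  refine (setLIntegral_superlevelSet_le μ hα hαE hM hD hw hΩ (mul_pos ht hρ')).trans
    (ENNReal.ofReal_le_ofReal ?_)
  exact (mul_le_mul_of_nonneg_left hpow (by positivity)).trans_eq (by ring)

end LevelSet

lemma norm_le_two_mul_sSup_norm {E : Type*} [SeminormedAddCommGroup E] {Ω : Set E}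
    (hΩ : Bornology.IsBounded Ω) {x : E} (hx : x ∈ Ω) :
    ‖x‖ ≤ 2 * sSup ((fun z ↦ ‖z‖) '' Ω) := by
  have hle : ‖x‖ ≤ sSup ((fun z ↦ ‖z‖) '' Ω) :=
    le_csSup (lipschitzWith_one_norm.isBounded_image hΩ).bddAbove (mem_image_of_mem _ hx)
  linarith [norm_nonneg x]

lemma exists_pos_forall_abs_infDist_le {X : Type*} [PseudoMetricSpace X] {Ω : Set X}
    (hΩ : Bornology.IsBounded Ω) (F : Set X) : ∃ M > 0, ∀ x ∈ Ω, |infDist x F| ≤ M := by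
  obtain ⟨M, hM, hle⟩ := ((lipschitz_infDist_pt F).isBounded_image hΩ).exists_pos_norm_le
  exact ⟨M, hM, fun x hx ↦ hle _ (mem_image_of_mem _ hx)⟩

theorem weak_estimate_dirac_log_general {E : Type*} [NormedAddCommGroup E] [NormedSpace ℝ E]
    [FiniteDimensional ℝ E] [MeasurableSpace E] [BorelSpace E] (μ : Measure E)
    [μ.IsAddHaarMeasure] {Ω : Set E} (hΩ : Bornology.IsBounded Ω) {α : ℝ} (hα : 0 < α)
    (hαE : α < Module.finrank ℝ E) :
    ∃ C : ℝ, 0 < C ∧ ∀ ρ : ℝ, ρ ≠ 0 → ∀ t : ℝ, 0 < t →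
      (∫⁻ x in {x | x ∈ Ω \ {0} ∧ t <
            |ρ * (infDist x (frontier Ω) * ‖x‖ ^ (-α) *
              Real.log (‖x‖ / (2 * sSup ((fun z ↦ ‖z‖) '' Ω))))|},
        ENNReal.ofReal (infDist x (frontier Ω) * ‖x‖ ^ (-α)) ∂μ)
      ≤ ENNReal.ofReal
          (C * (t⁻¹ * Real.log (Real.exp 1 + t)) ^ ((Module.finrank ℝ E - α) / α) *
            (|ρ| * Real.log (Real.exp 1 + |ρ|⁻¹)) ^ ((Module.finrank ℝ E - α) / α)) := by
  obtain ⟨M, hM, hd⟩ := exists_pos_forall_abs_infDist_le hΩ (frontier Ω)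
  have hD : 0 ≤ 2 * sSup ((fun z ↦ ‖z‖) '' Ω) :=
    mul_nonneg zero_le_two (Real.sSup_nonneg (forall_mem_image.mpr fun x _ ↦ norm_nonneg x))
  have hB : 0 < μ.real (ball 0 1) :=
    ENNReal.toReal_pos (measure_ball_pos μ 0 one_pos).ne' measure_ball_lt_top.ne
  have hn : (0 : ℝ) < Module.finrank ℝ E := hα.trans hαE
  refine ⟨M * (Module.finrank ℝ E * μ.real (ball 0 1) / (Module.finrank ℝ E - α)) *
    (2 * (M / α + (2 * sSup ((fun z ↦ ‖z‖) '' Ω)) ^ α)) ^ ((Module.finrank ℝ E - α) / α),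
    by positivity, fun ρ hρ t ht ↦ ?_⟩
  simpa only [logDecay, inv_inv] using setLIntegral_superlevelSet_const_mul_le μ hα hαE hM.le hD hd
    (fun x hx ↦ norm_le_two_mul_sSup_norm hΩ hx) hρ ht

/-- Distribution-function estimate for `x ↦ ρ d(x)|x|^{−α} ln(|x|/D_Ω)` with respect to
the weight `d(x)|x|^{−α}`. -/
theorem weak_estimate_dirac_log (N : ℕ) (hN : 2 < N) (Ω : Set (EuclideanSpace ℝ (Fin N)))
    (hΩo : IsOpen Ω) (hΩb : Bornology.IsBounded Ω) (h0 : (0 : EuclideanSpace ℝ (Fin N)) ∈ Ω)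
    (α : ℝ) (hα0 : 0 < α) (hα : α < (N : ℝ) / 2) :
    ∃ C : ℝ, 0 < C ∧ ∀ ρ : ℝ, ρ ∈ Set.Icc (-1 : ℝ) 1 → ρ ≠ 0 → ∀ t : ℝ, 0 < t →
      (∫⁻ x in {x | x ∈ Ω \ {0} ∧ t <
            |ρ * (infDist x (frontier Ω) * ‖x‖ ^ (-α) *
              Real.log (‖x‖ / (2 * sSup ((fun z => ‖z‖) '' Ω))))|},
        ENNReal.ofReal (infDist x (frontier Ω) * ‖x‖ ^ (-α)))
      ≤ ENNReal.ofReal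
          (C * (t⁻¹ * Real.log (Real.exp 1 + t)) ^ (((N : ℝ) - α) / α) *
            (|ρ| * Real.log (Real.exp 1 + |ρ|⁻¹)) ^ (((N : ℝ) - α) / α)) := by
  obtain ⟨C, hC, hbound⟩ := weak_estimate_dirac_log_general volume hΩb hα0
    (by simpa only [finrank_euclideanSpace_fin] using hα.trans_le (half_le_self N.cast_nonneg))
  exact ⟨C, hC, fun ρ _ hρ ↦ by simpa only [finrank_euclideanSpace_fin] using hbound ρ hρ⟩
end

section
/- Let N > 2 be an integer, Ω ⊂ ℝ^N a nonempty bounded open set with 0 ∈ Ω, let 0 < α < N/2, set D_Ω = 2·sup_{x∈Ω}|x|, and let ρ ∈ [−1,1] ∖ {0}. Define the measure dτ = d(x)|x|^{−α} dx on Ω ∖ {0} and the function f(x) = ρ · d(x) |x|^{−α} |ln(|x|/D_Ω)|. Then there exists C = C(N, Ω, α) > 0 (independent of ρ) such that for every measurable set A ⊂ Ω ∖ {0} with 0 < τ(A): ∫_A |f(x)| dτ(x) ≤ C |ρ| · τ(A)^{1 − α/(N−α)} · ln( e + τ(A)^{−1} ); that is, f belongs to the logarithmically weighted weak space L̃_w^{(N−α)/α}(Ω∖{0};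 d(x)|x|^{−α}) with norm ≲ |ρ|. -/
open MeasureTheory Metric Set

/-- The weight `d(x)|x|^{−α}`. -/
noncomputable def wgt (N : ℕ) (Ω : Set (EuclideanSpace ℝ (Fin N))) (α : ℝ)
    (x : EuclideanSpace ℝ (Fin N)) : ℝ :=
  infDist x (frontier Ω) * ‖x‖ ^ (-α)

/-- The function `f(x) = ρ d(x)|x|^{−α} |ln(|x|/D_Ω)|`. -/
noncomputable def logFun (N : ℕ) (Ω : Set (EuclideanSpace ℝ (Fin N))) (α ρ : ℝ)
    (x : EuclideanSpace ℝ (Fin N)) : ℝ :=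
  ρ * (infDist x (frontier Ω) * ‖x‖ ^ (-α) *
    |Real.log (‖x‖ / (2 * sSup ((fun z => ‖z‖) '' Ω)))|)

/-!
With `D = D_Ω` and `g(x) = |x|^{-α} log⁺(D/|x|)`, both `|f| ≤ |ρ| M g` and `dτ ≤ M |x|^{-α} dx` on
`Ω`, where `M` bounds the distance to the boundary. Cut `∫_A g dτ` at the radius
`r = τ(A)^{1/(N-α)}`, for which `r^{-α} τ(A) = r^{N-2α} = τ(A)^{1-α/(N-α)}`. Outside the ball of
radius `r`, `g` is at most `r^{-α} log⁺(D/r)`; inside, rescaling to the unit ball bounds the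
integral of `|x|^{-2α} log⁺(D/|x|)` by a multiple of `r^{N-2α} (1 + log⁺(D/r))`. The choice of `r`
also gives `1 + log⁺(D/r) ≲ log(e + τ(A)⁻¹)`.
-/

section

open Module
open scoped ENNReal NNReal Pointwise Real

section ScalarEstimates

variable {D r s t x ε : ℝ}

lemma one_add_posLog_inv_le_rpow_neg (hε : 0 < ε) (hx : 0 < x) (hx1 : x ≤ 1) :
    1 + log⁺ x⁻¹ ≤ (1 + 1 / ε) * x ^ (-ε) := by
  have one_le_rpow : 1 ≤ x ^ (-ε) :=
    Real.one_le_rpow_of_pos_of_le_one_of_nonpos hx hx1 (neg_nonpos.2 hε.le)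
  have log_le : Real.log x⁻¹ ≤ x ^ (-ε) / ε := by
    simpa only [Real.rpow_neg_eq_inv_rpow] using Real.log_le_rpow_div (inv_nonneg.2 hx.le) hε
  rw [Real.posLog_eq_log ((one_le_inv₀ hx).2 hx1 |>.trans (le_abs_self _))]
  linear_combination one_le_rpow + log_le

lemma posLog_div_mul_le : log⁺ (D / (r * x)) ≤ (1 + log⁺ (D / r)) * (1 + log⁺ x⁻¹) := by
  have hmul : log⁺ (D / (r * x)) ≤ log⁺ (D / r) + log⁺ x⁻¹ := by
    rw [← div_div, div_eq_mul_inv (D / r)]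
    exact Real.posLog_mul
  nlinarith [Real.posLog_nonneg (x := D / r), Real.posLog_nonneg (x := x⁻¹)]

lemma posLog_rpow (ht : 0 < t) (hs : 0 ≤ s) : log⁺ (t ^ s) = s * log⁺ t := by
  rw [Real.posLog_apply, Real.posLog_apply, Real.log_rpow ht, mul_max_of_nonneg _ _ hs, mul_zero]

lemma one_add_posLog_div_rpow_le (ht : 0 < t) (hs : 0 ≤ s) :
    1 + log⁺ (D / t ^ s) ≤ (1 + log⁺ D + s) * Real.log (Real.exp 1 + t⁻¹) := by
  have ht' : 0 < t⁻¹ := inv_pos.2 ht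
  have one_le_log : 1 ≤ Real.log (Real.exp 1 + t⁻¹) := by
    rw [Real.le_log_iff_exp_le (by positivity)]
    linarith
  have posLog_inv_le : log⁺ t⁻¹ ≤ Real.log (Real.exp 1 + t⁻¹) :=
    max_le (by linarith) (Real.log_le_log ht' (by linarith [Real.exp_pos 1]))
  have posLog_div_le : log⁺ (D / t ^ s) ≤ log⁺ D + s * log⁺ t⁻¹ := by
    rw [div_eq_mul_inv, ← Real.inv_rpow ht.le]
    exact Real.posLog_mul.trans (add_le_add_right (posLog_rpow ht' hs).le _)
  have hD : 0 ≤ log⁺ D := Real.posLog_nonneg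
  linear_combination posLog_div_le + (1 + log⁺ D) * one_le_log + s * posLog_inv_le

lemma rpow_one_div_rpow_neg_mul_self {n α : ℝ} (ht : 0 < t) :
    (t ^ (1 / (n - α))) ^ (-α) * t = t ^ (1 - α / (n - α)) := by
  rw [← Real.rpow_mul ht.le, ← Real.rpow_add_one ht.ne']
  ring_nf

lemma rpow_one_div_rpow_sub_two_mul {n α : ℝ} (ht : 0 ≤ t) (hn : n - α ≠ 0) :
    (t ^ (1 / (n - α))) ^ (n - 2 * α) = t ^ (1 - α / (n - α)) := by
  rw [← Real.rpow_mul ht]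
  congr 1
  field_simp
  ring

lemma abs_log_div_eq_posLog (hx : 0 ≤ x) (hxD : x ≤ D) : |Real.log (x / D)| = log⁺ (D / x) := by
  rcases hx.eq_or_lt with rfl | hx
  · simp
  · have one_le_div : 1 ≤ D / x := (one_le_div hx).2 hxD
    rw [Real.posLog_eq_log (one_le_div.trans (le_abs_self _)), ← inv_div, Real.log_inv, abs_neg,
      abs_of_nonneg (Real.log_nonneg one_le_div)]

end ScalarEstimates

section Cutoff

/-- The integral of `|x|^{-β} (1 + log⁺(1/|x|))` over the unit ball: the constant by which
integrals of `|x|^{-β} log⁺(D/|x|)` over balls are controlled. -/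
noncomputable def logRieszMass {E : Type*} [SeminormedAddCommGroup E]
    [MeasurableSpace E] (μ : Measure E) (β : ℝ) : ℝ≥0∞ :=
  ∫⁻ x in ball (0 : E) 1, ENNReal.ofReal (‖x‖ ^ (-β) * (1 + log⁺ ‖x‖⁻¹)) ∂μ

lemma setLIntegral_compl_ball_rpow_mul_posLog_le {E : Type*} [SeminormedAddCommGroup E]
    [MeasurableSpace E] [OpensMeasurableSpace E] (ν : Measure E) {α D r : ℝ} (hα : 0 ≤ α)
    (hD : 0 ≤ D) (hr : 0 < r) :
    ∫⁻ x in (ball 0 r)ᶜ, ENNReal.ofReal (‖x‖ ^ (-α) * log⁺ (D / ‖x‖)) ∂ν ≤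
      ENNReal.ofReal (r ^ (-α) * log⁺ (D / r)) * ν univ := by
  calc ∫⁻ x in (ball 0 r)ᶜ, ENNReal.ofReal (‖x‖ ^ (-α) * log⁺ (D / ‖x‖)) ∂ν
      ≤ ∫⁻ _ in (ball 0 r)ᶜ, ENNReal.ofReal (r ^ (-α) * log⁺ (D / r)) ∂ν := by
        refine setLIntegral_mono' measurableSet_ball.compl fun x hx ↦ ENNReal.ofReal_le_ofReal ?_
        have hrx : r ≤ ‖x‖ := by simpa only [mem_compl_iff, mem_ball_zero_iff, not_lt] using hx
        have hrpow : ‖x‖ ^ (-α) ≤ r ^ (-α) :=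
          Real.rpow_le_rpow_of_nonpos hr hrx (neg_nonpos.2 hα)
        have hpos : 0 ≤ log⁺ (D / ‖x‖) := Real.posLog_nonneg
        gcongr
    _ ≤ _ := by
        rw [setLIntegral_const]
        gcongr
        exact subset_univ _

variable {E : Type*} [NormedAddCommGroup E] [NormedSpace ℝ E] [FiniteDimensional ℝ E]
  [MeasurableSpace E] [BorelSpace E] (μ : Measure E) [μ.IsAddHaarMeasure]

lemma setLIntegral_ball_eq_unitBall_comp_smul (f : E → ℝ≥0∞) {r : ℝ} (hr : 0 < r) :
    ∫⁻ x in ball 0 r, f x ∂μ =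
      ENNReal.ofReal (r ^ finrank ℝ E) * ∫⁻ x in ball 0 1, f (r • x) ∂μ := by
  have preimage_ball : (r • ·) ⁻¹' ball (0 : E) r = ball 0 1 := by
    rw [preimage_smul₀ hr.ne', ← smul_unitBall_of_pos hr, inv_smul_smul₀ hr.ne']
  have hmap : ∫⁻ x in ball 0 1, f (r • x) ∂μ =
      ENNReal.ofReal (r ^ finrank ℝ E)⁻¹ * ∫⁻ x in ball 0 r, f x ∂μ := by
    have hemb := measurableEmbedding_const_smul₀ (α := E) hr.ne'
    rw [← preimage_ball, ← hemb.lintegral_map, ← hemb.restrict_map,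
      Measure.map_addHaar_smul μ hr.ne', Measure.restrict_smul, lintegral_smul_measure,
      smul_eq_mul, abs_of_pos (by positivity)]
  rw [hmap, ← mul_assoc, ← ENNReal.ofReal_mul (by positivity), mul_inv_cancel₀ (by positivity),
    ENNReal.ofReal_one, one_mul]

lemma logRieszMass_ne_top {β : ℝ} (hE : 0 < finrank ℝ E) (hβ : β < finrank ℝ E) :
    logRieszMass μ β ≠ ∞ := by
  obtain ⟨γ, hβγ, hγ⟩ := exists_between hβ
  have : Nontrivial E := nontrivial_of_finrank_pos hE
  have hint : IntegrableOn (fun x : E ↦ ‖x‖ ^ (-β) * (1 + log⁺ ‖x‖⁻¹)) (ball 0 1) μ := by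
    refine integrableOn_ball_of_norm_le_rpow (C := 1 + 1 / (γ - β)) hE hγ ?_ ?_
    · filter_upwards [ae_restrict_mem measurableSet_ball,
        ae_restrict_of_ae (Measure.ae_ne μ 0)] with x hx hx0
      have hnorm : 0 < ‖x‖ := norm_pos_iff.2 hx0
      have hlog := one_add_posLog_inv_le_rpow_neg (sub_pos.2 hβγ) hnorm (mem_ball_zero_iff.1 hx).le
      have hpos : 0 ≤ log⁺ ‖x‖⁻¹ := Real.posLog_nonneg
      calc ‖‖x‖ ^ (-β) * (1 + log⁺ ‖x‖⁻¹)‖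
          = ‖x‖ ^ (-β) * (1 + log⁺ ‖x‖⁻¹) := Real.norm_of_nonneg (by positivity)
        _ ≤ ‖x‖ ^ (-β) * ((1 + 1 / (γ - β)) * ‖x‖ ^ (-(γ - β))) := by gcongr
        _ = (1 + 1 / (γ - β)) * ‖x‖ ^ (-γ) := by
          rw [mul_left_comm, ← Real.rpow_add hnorm]
          ring_nf
    · exact Measurable.aestronglyMeasurable (by fun_prop)
  rw [logRieszMass]
  exact hint.lintegral_lt_top.ne

lemma setLIntegral_ball_rpow_mul_posLog_le (β D : ℝ) {r : ℝ} (hr : 0 < r) :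
    ∫⁻ x in ball (0 : E) r, ENNReal.ofReal (‖x‖ ^ (-β) * log⁺ (D / ‖x‖)) ∂μ ≤
      ENNReal.ofReal (r ^ (finrank ℝ E - β) * (1 + log⁺ (D / r))) * logRieszMass μ β := by
  have hlog : 0 ≤ log⁺ (D / r) := Real.posLog_nonneg
  have hscale (x : E) : ‖r • x‖ ^ (-β) * log⁺ (D / ‖r • x‖) ≤
      r ^ (-β) * (1 + log⁺ (D / r)) * (‖x‖ ^ (-β) * (1 + log⁺ ‖x‖⁻¹)) := by
    rw [norm_smul, Real.norm_of_nonneg hr.le, Real.mul_rpow hr.le (norm_nonneg x)]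
    calc r ^ (-β) * ‖x‖ ^ (-β) * log⁺ (D / (r * ‖x‖))
        ≤ r ^ (-β) * ‖x‖ ^ (-β) * ((1 + log⁺ (D / r)) * (1 + log⁺ ‖x‖⁻¹)) := by
          gcongr
          exact posLog_div_mul_le
      _ = _ := by ring
  calc ∫⁻ x in ball (0 : E) r, ENNReal.ofReal (‖x‖ ^ (-β) * log⁺ (D / ‖x‖)) ∂μ
      = ENNReal.ofReal (r ^ finrank ℝ E) *
          ∫⁻ x in ball (0 : E) 1, ENNReal.ofReal (‖r • x‖ ^ (-β) * log⁺ (D / ‖r • x‖)) ∂μ :=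
        setLIntegral_ball_eq_unitBall_comp_smul μ _ hr
    _ ≤ ENNReal.ofReal (r ^ finrank ℝ E) *
          (ENNReal.ofReal (r ^ (-β) * (1 + log⁺ (D / r))) * logRieszMass μ β) := by
        refine mul_le_mul_right ?_ _
        rw [logRieszMass, ← lintegral_const_mul' _ _ ENNReal.ofReal_ne_top]
        refine lintegral_mono fun x ↦ ?_
        rw [← ENNReal.ofReal_mul (by positivity)]
        exact ENNReal.ofReal_le_ofReal (hscale x)
    _ = _ := by
        rw [← mul_assoc, ← ENNReal.ofReal_mul (by positivity), ← mul_assoc, ← Real.rpow_natCast,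
          ← Real.rpow_add hr, ← sub_eq_add_neg]

variable {μ} {ν : Measure E} {M : ℝ≥0} {α : ℝ}

lemma setLIntegral_ball_rpow_mul_posLog_le_of_le_withDensity (D : ℝ)
    (hν : ν ≤ M • μ.withDensity fun x ↦ ENNReal.ofReal (‖x‖ ^ (-α))) {r : ℝ} (hr : 0 < r) :
    ∫⁻ x in ball 0 r, ENNReal.ofReal (‖x‖ ^ (-α) * log⁺ (D / ‖x‖)) ∂ν ≤
      M * (ENNReal.ofReal (r ^ (finrank ℝ E - 2 * α) * (1 + log⁺ (D / r))) *
        logRieszMass μ (2 * α)) := by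
  calc ∫⁻ x in ball 0 r, ENNReal.ofReal (‖x‖ ^ (-α) * log⁺ (D / ‖x‖)) ∂ν
      ≤ ∫⁻ x in ball 0 r, ENNReal.ofReal (‖x‖ ^ (-α) * log⁺ (D / ‖x‖))
          ∂(M • μ.withDensity fun x ↦ ENNReal.ofReal (‖x‖ ^ (-α))) :=
        lintegral_mono' (Measure.restrict_mono_measure hν _) le_rfl
    _ = M * ∫⁻ x in ball 0 r, ENNReal.ofReal (‖x‖ ^ (-(2 * α)) * log⁺ (D / ‖x‖)) ∂μ := by
        rw [setLIntegral_smul_measure, ENNReal.smul_def, smul_eq_mul,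
          setLIntegral_withDensity_eq_setLIntegral_mul _ (by fun_prop) (by fun_prop)
            measurableSet_ball]
        congr 2 with x
        have rpow_sq : ‖x‖ ^ (-(2 * α)) = (‖x‖ ^ (-α)) ^ 2 := by
          rw [← Real.rpow_mul_natCast (norm_nonneg x)]
          ring_nf
        rw [Pi.mul_apply, ← ENNReal.ofReal_mul (by positivity), rpow_sq, sq, mul_assoc]
    _ ≤ _ := by
        gcongr
        exact setLIntegral_ball_rpow_mul_posLog_le μ _ D hr

lemma lintegral_rpow_mul_posLog_le_of_radius {D : ℝ} (hD : 0 ≤ D) (hα : 0 ≤ α)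
    (hν : ν ≤ M • μ.withDensity fun x ↦ ENNReal.ofReal (‖x‖ ^ (-α))) {r : ℝ} (hr : 0 < r) :
    ∫⁻ x, ENNReal.ofReal (‖x‖ ^ (-α) * log⁺ (D / ‖x‖)) ∂ν ≤
      ENNReal.ofReal (1 + log⁺ (D / r)) * (ENNReal.ofReal (r ^ (-α)) * ν univ +
        M * logRieszMass μ (2 * α) * ENNReal.ofReal (r ^ (finrank ℝ E - 2 * α))) := by
  have hle : log⁺ (D / r) ≤ 1 + log⁺ (D / r) := by linarith
  calc ∫⁻ x, ENNReal.ofReal (‖x‖ ^ (-α) * log⁺ (D / ‖x‖)) ∂ν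
      ≤ M * (ENNReal.ofReal (r ^ (finrank ℝ E - 2 * α) * (1 + log⁺ (D / r))) *
            logRieszMass μ (2 * α)) +
          ENNReal.ofReal (r ^ (-α) * (1 + log⁺ (D / r))) * ν univ := by
        rw [← lintegral_add_compl _ (measurableSet_ball (x := (0 : E)) (ε := r))]
        refine add_le_add (setLIntegral_ball_rpow_mul_posLog_le_of_le_withDensity D hν hr)
          ((setLIntegral_compl_ball_rpow_mul_posLog_le ν hα hD hr).trans ?_)
        gcongr
    _ = _ := by
        rw [ENNReal.ofReal_mul (by positivity), ENNReal.ofReal_mul (by positivity)]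
        ring

lemma lintegral_rpow_mul_posLog_le_of_finite {D t : ℝ} (hD : 0 ≤ D) (hα : 0 ≤ α)
    (hαE : α < finrank ℝ E)
    (hν : ν ≤ M • μ.withDensity fun x ↦ ENNReal.ofReal (‖x‖ ^ (-α)))
    (ht : 0 < t) (hνt : ν univ = ENNReal.ofReal t) :
    ∫⁻ x, ENNReal.ofReal (‖x‖ ^ (-α) * log⁺ (D / ‖x‖)) ∂ν ≤
      (1 + M * logRieszMass μ (2 * α)) *
        ENNReal.ofReal (1 + log⁺ D + 1 / (finrank ℝ E - α)) *
        ν univ ^ (1 - α / (finrank ℝ E - α)) *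
        ENNReal.ofReal (Real.log (Real.exp 1 + t⁻¹)) := by
  set p := 1 - α / (finrank ℝ E - α)
  set s := 1 / (finrank ℝ E - α)
  have hq : 0 < finrank ℝ E - α := sub_pos.2 hαE
  have hs : 0 ≤ s := by positivity
  have hDlog : 0 ≤ log⁺ D := Real.posLog_nonneg
  calc ∫⁻ x, ENNReal.ofReal (‖x‖ ^ (-α) * log⁺ (D / ‖x‖)) ∂ν
      ≤ ENNReal.ofReal (1 + log⁺ (D / t ^ s)) * (ENNReal.ofReal ((t ^ s) ^ (-α)) * ν univ +
          M * logRieszMass μ (2 * α) * ENNReal.ofReal ((t ^ s) ^ (finrank ℝ E - 2 * α))) :=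
        lintegral_rpow_mul_posLog_le_of_radius hD hα hν (Real.rpow_pos_of_pos ht s)
    _ = ENNReal.ofReal (1 + log⁺ (D / t ^ s)) *
          ((1 + M * logRieszMass μ (2 * α)) * ν univ ^ p) := by
        rw [hνt, ← ENNReal.ofReal_mul (by positivity), rpow_one_div_rpow_neg_mul_self ht,
          rpow_one_div_rpow_sub_two_mul ht.le hq.ne', ENNReal.ofReal_rpow_of_pos ht]
        ring
    _ ≤ ENNReal.ofReal ((1 + log⁺ D + s) * Real.log (Real.exp 1 + t⁻¹)) *
          ((1 + M * logRieszMass μ (2 * α)) * ν univ ^ p) := by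
        gcongr
        exact one_add_posLog_div_rpow_le ht hs
    _ = _ := by
        rw [ENNReal.ofReal_mul (by positivity)]
        ring

variable (μ M) in
theorem exists_lintegral_rpow_mul_posLog_le {D : ℝ} (hD : 0 ≤ D) (hα : 0 ≤ α)
    (hαE : α < finrank ℝ E / 2) :
    ∃ C : ℝ, 0 < C ∧ ∀ ν : Measure E,
      ν ≤ M • μ.withDensity (fun x ↦ ENNReal.ofReal (‖x‖ ^ (-α))) →
      ∫⁻ x, ENNReal.ofReal (‖x‖ ^ (-α) * log⁺ (D / ‖x‖)) ∂ν ≤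
        ENNReal.ofReal C * ν univ ^ (1 - α / (finrank ℝ E - α)) *
          ENNReal.ofReal (Real.log (Real.exp 1 + ((ν univ)⁻¹).toReal)) := by
  have hq : 0 < finrank ℝ E - α := by linarith
  have hdim : 0 < finrank ℝ E := by exact_mod_cast (by linarith : (0 : ℝ) < finrank ℝ E)
  have hexp : 0 < 1 - α / (finrank ℝ E - α) := by
    rw [sub_pos, div_lt_one hq]
    linarith
  have hK := logRieszMass_ne_top μ (β := 2 * α) hdim (by linarith)
  have hDlog : 0 ≤ log⁺ D := Real.posLog_nonneg
  set C : ℝ := (1 + M * (logRieszMass μ (2 * α)).toReal) *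
    (1 + log⁺ D + 1 / (finrank ℝ E - α)) with C_def
  have hC : 0 < C := by positivity
  refine ⟨C, hC, fun ν hν ↦ ?_⟩
  rcases eq_or_ne ν 0 with rfl | hν0
  · simp
  rcases eq_or_ne (ν univ) ∞ with htop | hfin
  · simp [htop, ENNReal.top_rpow_of_pos hexp, hC]
  have ht : 0 < (ν univ).toReal := ENNReal.toReal_pos (by simpa using hν0) hfin
  refine (lintegral_rpow_mul_posLog_le_of_finite hD hα (by linarith) hν ht
    (ENNReal.ofReal_toReal hfin).symm).trans_eq ?_
  rw [C_def, ENNReal.toReal_inv, ENNReal.ofReal_mul (by positivity),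
    ENNReal.ofReal_add zero_le_one (by positivity), ENNReal.ofReal_mul (by positivity),
    ENNReal.ofReal_toReal hK, ENNReal.ofReal_one, ENNReal.ofReal_coe_nnreal]

end Cutoff

section Domain

lemma exists_infDist_le_of_isBounded {X : Type*} [PseudoMetricSpace X] {s : Set X}
    (hs : Bornology.IsBounded s) (t : Set X) : ∃ M : ℝ≥0, 0 < M ∧ ∀ x ∈ s, infDist x t ≤ M := by
  obtain ⟨M, hM, hle⟩ := ((lipschitz_infDist_pt t).isBounded_image hs).exists_pos_norm_le
  lift M to ℝ≥0 using hM.le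
  exact ⟨M, mod_cast hM, fun x hx ↦ (le_abs_self _).trans (hle _ (mem_image_of_mem _ hx))⟩

variable {N : ℕ} {Ω A : Set (EuclideanSpace ℝ (Fin N))} {α ρ : ℝ} {M : ℝ≥0}

lemma measurable_wgt : Measurable (wgt N Ω α) := by
  unfold wgt
  fun_prop

lemma withDensity_wgt_restrict_le (hA : MeasurableSet A)
    (hM : ∀ x ∈ A, infDist x (frontier Ω) ≤ M) :
    (volume.restrict A).withDensity (fun x ↦ ENNReal.ofReal (wgt N Ω α x)) ≤
      M • volume.withDensity fun x ↦ ENNReal.ofReal (‖x‖ ^ (-α)) := by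
  calc (volume.restrict A).withDensity (fun x ↦ ENNReal.ofReal (wgt N Ω α x))
      ≤ (volume.restrict A).withDensity (M • fun x ↦ ENNReal.ofReal (‖x‖ ^ (-α))) := by
        refine withDensity_mono ?_
        filter_upwards [ae_restrict_mem hA] with x hx
        rw [Pi.smul_apply, ENNReal.smul_def, smul_eq_mul, ← ENNReal.ofReal_coe_nnreal,
          ← ENNReal.ofReal_mul M.coe_nonneg]
        unfold wgt
        gcongr
        exact hM x hx
    _ ≤ M • volume.withDensity fun x ↦ ENNReal.ofReal (‖x‖ ^ (-α)) := by
        rw [← restrict_withDensity hA]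
        refine Measure.restrict_le_self.trans_eq ?_
        exact withDensity_smul _ (by fun_prop)

lemma abs_logFun_le (hΩ : Bornology.IsBounded Ω) (hM : ∀ x ∈ Ω, infDist x (frontier Ω) ≤ M)
    {x : EuclideanSpace ℝ (Fin N)} (hx : x ∈ Ω) :
    |logFun N Ω α ρ x| ≤
      M * |ρ| * (‖x‖ ^ (-α) * log⁺ (2 * sSup ((fun z ↦ ‖z‖) '' Ω) / ‖x‖)) := by
  have hbdd : BddAbove ((fun z ↦ ‖z‖) '' Ω) := by
    obtain ⟨B, hB⟩ := hΩ.exists_norm_le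
    exact ⟨B, forall_mem_image.2 hB⟩
  have hle : ‖x‖ ≤ 2 * sSup ((fun z ↦ ‖z‖) '' Ω) := by
    linarith [le_csSup hbdd (mem_image_of_mem _ hx), norm_nonneg x]
  set D := 2 * sSup ((fun z ↦ ‖z‖) '' Ω)
  have hpos : 0 ≤ log⁺ (D / ‖x‖) := Real.posLog_nonneg
  have hd : 0 ≤ infDist x (frontier Ω) := infDist_nonneg
  calc |logFun N Ω α ρ x|
      = |ρ| * (infDist x (frontier Ω) * ‖x‖ ^ (-α) * log⁺ (D / ‖x‖)) := by
        rw [logFun, abs_log_div_eq_posLog (norm_nonneg x) hle, abs_mul,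
          abs_of_nonneg (a := _ * _ * _) (by positivity)]
    _ ≤ |ρ| * (M * ‖x‖ ^ (-α) * log⁺ (D / ‖x‖)) := by
        gcongr
        exact hM x hx
    _ = M * |ρ| * (‖x‖ ^ (-α) * log⁺ (D / ‖x‖)) := by ring

lemma setLIntegral_abs_logFun_mul_wgt_le (hΩ : Bornology.IsBounded Ω)
    (hM : ∀ x ∈ Ω, infDist x (frontier Ω) ≤ M) (hA : MeasurableSet A) (hAΩ : A ⊆ Ω) :
    ∫⁻ x in A, ENNReal.ofReal (|logFun N Ω α ρ x| * wgt N Ω α x) ≤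
      ENNReal.ofReal (M * |ρ|) *
        ∫⁻ x, ENNReal.ofReal (‖x‖ ^ (-α) * log⁺ (2 * sSup ((fun z ↦ ‖z‖) '' Ω) / ‖x‖))
          ∂(volume.restrict A).withDensity fun x ↦ ENNReal.ofReal (wgt N Ω α x) := by
  rw [lintegral_withDensity_eq_lintegral_mul _ measurable_wgt.ennreal_ofReal (by fun_prop),
    ← lintegral_const_mul' _ _ ENNReal.ofReal_ne_top]
  refine setLIntegral_mono' hA fun x hx ↦ ?_
  rw [Pi.mul_apply, mul_comm (ENNReal.ofReal (wgt N Ω α x)), ← mul_assoc,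
    ← ENNReal.ofReal_mul (by positivity), ENNReal.ofReal_mul (abs_nonneg _)]
  gcongr
  exact abs_logFun_le hΩ hM (hAΩ hx)

end Domain

theorem log_weak_space_estimate_general (N : ℕ) (Ω : Set (EuclideanSpace ℝ (Fin N)))
    (hΩ : Bornology.IsBounded Ω) (α : ℝ) (hα0 : 0 ≤ α) (hα : α < (N : ℝ) / 2) :
    ∃ C : ℝ, 0 < C ∧ ∀ ρ : ℝ, ∀ A : Set (EuclideanSpace ℝ (Fin N)), MeasurableSet A → A ⊆ Ω →
      (∫⁻ x in A, ENNReal.ofReal (|logFun N Ω α ρ x| * wgt N Ω α x))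
        ≤ ENNReal.ofReal (C * |ρ|) *
          (∫⁻ x in A, ENNReal.ofReal (wgt N Ω α x)) ^ (1 - α / ((N : ℝ) - α)) *
          ENNReal.ofReal (Real.log (Real.exp 1 +
            ((∫⁻ x in A, ENNReal.ofReal (wgt N Ω α x))⁻¹).toReal)) := by
  obtain ⟨M, hM0, hM⟩ := exists_infDist_le_of_isBounded hΩ (frontier Ω)
  have hD : 0 ≤ 2 * sSup ((fun z ↦ ‖z‖) '' Ω) := by
    have := Real.sSup_nonneg (forall_mem_image.2 fun z (_ : z ∈ Ω) ↦ norm_nonneg z)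
    positivity
  obtain ⟨C, hC0, hC⟩ := exists_lintegral_rpow_mul_posLog_le
    (volume : Measure (EuclideanSpace ℝ (Fin N))) M hD hα0 (by simpa using hα)
  refine ⟨M * C, by positivity, fun ρ A hA hAΩ ↦ ?_⟩
  have hdensity := hC _ (withDensity_wgt_restrict_le (α := α) hA fun x hx ↦ hM x (hAΩ hx))
  rw [withDensity_apply _ .univ, Measure.restrict_univ, finrank_euclideanSpace_fin] at hdensity
  refine (setLIntegral_abs_logFun_mul_wgt_le hΩ hM hA hAΩ).trans
    ((mul_le_mul_right hdensity _).trans_eq ?_)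
  rw [← mul_assoc, ← mul_assoc, ← ENNReal.ofReal_mul (by positivity), mul_right_comm (M : ℝ)]

end

/-- `f` belongs to the logarithmically weighted weak space
`L̃_w^{(N−α)/α}(Ω∖{0}; d(x)|x|^{−α})` with norm `≲ |ρ|`. -/
theorem log_weak_space_estimate (N : ℕ) (hN : 2 < N) (Ω : Set (EuclideanSpace ℝ (Fin N)))
    (hΩo : IsOpen Ω) (hΩb : Bornology.IsBounded Ω) (h0 : (0 : EuclideanSpace ℝ (Fin N)) ∈ Ω)
    (α : ℝ) (hα0 : 0 < α) (hα : α < (N : ℝ) / 2) :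
    ∃ C : ℝ, 0 < C ∧ ∀ ρ : ℝ, ρ ∈ Set.Icc (-1 : ℝ) 1 → ρ ≠ 0 →
      ∀ A : Set (EuclideanSpace ℝ (Fin N)), MeasurableSet A → A ⊆ Ω \ {0} →
        0 < (∫⁻ x in A, ENNReal.ofReal (wgt N Ω α x)) →
      (∫⁻ x in A, ENNReal.ofReal (|logFun N Ω α ρ x| * wgt N Ω α x))
        ≤ ENNReal.ofReal (C * |ρ|) *
          (∫⁻ x in A, ENNReal.ofReal (wgt N Ω α x)) ^ (1 - α / ((N : ℝ) - α)) *
          ENNReal.ofReal (Real.log (Real.exp 1 +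
            ((∫⁻ x in A, ENNReal.ofReal (wgt N Ω α x))⁻¹).toReal)) := by
  obtain ⟨C, hC0, hC⟩ := log_weak_space_estimate_general N Ω hΩb α hα0.le hα
  exact ⟨C, hC0, fun ρ _ _ A hA hAΩ _ ↦ hC ρ A hA (hAΩ.trans sdiff_subset)⟩
end
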